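/- arXiv:2602.15390 — 4 statements merged into one kernel-verified Lean document; each statement's English description precedes it below -/
import Mathlib

section
/- Let d ≥ 1, let N ≥ 1 be an integer, let c₁ > 0, and let Λ ⊂ ℝ^d be a full-rank lattice with a generating matrix of determinant ±1/N such that λ₁(Λ) ≥ c₁ · N^{−1/d}, and let P = Λ ∩ [0,1)^d have exactly N points. Then the isotropic discrepancy of P satisfies J(P) ≤ (d^d · 2^{d+2} · d! · π^{d/2} / (c₁^{d−1} · Γ(1+d/2))) · N^{−1/d}; in particular J(P) ≤ C · N^{−1/d} for a constant C depending only on d and c₁. -/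
open scoped RealInnerProductSpace

noncomputable section

/-- `ℝ^d` with the Euclidean norm. -/
abbrev Euc (d : ℕ) := EuclideanSpace ℝ (Fin d)

/-- `Λ` is the full-rank lattice generated by the columns of the invertible matrix `T`. -/
def IsLatticeOf {d : ℕ} (Λ : Set (Euc d)) (T : Matrix (Fin d) (Fin d) ℝ) : Prop :=
  IsUnit T.det ∧ Λ = { v : Euc d | ∃ k : Fin d → ℤ, ∀ i, v i = ∑ j, T i j * (k j : ℝ) }

/-- Covering radius of `Λ` with respect to all of `ℝ^d`:
`h(Λ) = sup_{x ∈ ℝ^d} inf_{y ∈ Λ} ‖x - y‖₂`. -/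
def covRad {d : ℕ} (Λ : Set (Euc d)) : ℝ :=
  ⨆ x : Euc d, sInf (Set.image (dist x) Λ)

/-- Separation radius of a lattice: half the length of the shortest nonzero vector. -/
def sepRad {d : ℕ} (Λ : Set (Euc d)) : ℝ :=
  (1 / 2) * sInf (Set.image norm (Λ \ {0}))

/-- Mesh ratio `ρ(Λ) = h(Λ)/q(Λ)` of a lattice. -/
def meshRatio {d : ℕ} (Λ : Set (Euc d)) : ℝ := covRad Λ / sepRad Λ

/-- The `j`-th successive minimum of `Λ` with respect to the Euclidean unit ball:
`λ_j(Λ) = inf { r > 0 : dim span(Λ ∩ rB_d) ≥ j }`. -/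
def succMin {d : ℕ} (Λ : Set (Euc d)) (j : ℕ) : ℝ :=
  sInf { r : ℝ | 0 < r ∧
    j ≤ Module.finrank ℝ (Submodule.span ℝ (Λ ∩ Metric.closedBall (0 : Euc d) r)) }

/-- The dual lattice `Λ⊥ = { y : x·y ∈ ℤ for all x ∈ Λ }`. -/
def dualLat {d : ℕ} (Λ : Set (Euc d)) : Set (Euc d) :=
  { y | ∀ x ∈ Λ, ∃ n : ℤ, ⟪x, y⟫ = (n : ℝ) }

/-- The closed unit cube `[0,1]^d`. -/
def unitCube (d : ℕ) : Set (Euc d) := { x | ∀ i, 0 ≤ x i ∧ x i ≤ 1 }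

/-- The half-open unit cube `[0,1)^d`. -/
def halfOpenCube (d : ℕ) : Set (Euc d) := { x | ∀ i, 0 ≤ x i ∧ x i < 1 }

/-- Covering radius of a point set `P` with respect to the unit cube `[0,1]^d`. -/
def covRadCube {d : ℕ} (P : Set (Euc d)) : ℝ :=
  ⨆ x : unitCube d, sInf (Set.image (dist (x : Euc d)) P)

/-- Separation radius of a point set:
`q(P) = (1/2) min_{x ≠ y ∈ P} ‖x - y‖₂`. -/
def sepRadSet {d : ℕ} (P : Set (Euc d)) : ℝ :=
  (1 / 2) * sInf { r : ℝ | ∃ x ∈ P, ∃ y ∈ P, x ≠ y ∧ r = dist x y }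

/-- Mesh ratio `ρ(P) = h(P)/q(P)` of a point set with respect to `[0,1]^d`. -/
def meshRatioSet {d : ℕ} (P : Set (Euc d)) : ℝ := covRadCube P / sepRadSet P

/-- The constant `C_d = 2^d Γ(1+d/2) / π^{d/2}`. -/
def Cd (d : ℕ) : ℝ := 2 ^ d * Real.Gamma (1 + (d : ℝ) / 2) / Real.pi ^ ((d : ℝ) / 2)

/-- Isotropic discrepancy of an `N`-point set `P ⊂ [0,1)^d`:
the supremum over all convex subsets `C` of `[0,1)^d` of `||P ∩ C|/N - vol(C)|`. -/
def isoDisc {d : ℕ} (P : Set (Euc d)) (N : ℕ) : ℝ :=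
  ⨆ C : {C : Set (Euc d) // Convex ℝ C ∧ C ⊆ halfOpenCube d},
    |((P ∩ (C : Set (Euc d))).ncard : ℝ) / N -
      (MeasureTheory.volume (C : Set (Euc d))).toReal|

open MeasureTheory in
lemma vol_box {d : ℕ} (l : Fin d → ℝ) (hl : ∀ i, 0 ≤ l i) :
    volume {x : Euc d | ∀ i, 0 ≤ x i ∧ x i < l i} = ENNReal.ofReal (∏ i, l i) := by
  have h := (EuclideanSpace.volume_preserving_symm_measurableEquiv_toLp (Fin d)).measure_preimage_equiv
    (Set.pi Set.univ (fun i => Set.Ico (0 : ℝ) (l i)))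
  have h2 : {x : Euc d | ∀ i, 0 ≤ x i ∧ x i < l i} =
      (MeasurableEquiv.toLp 2 (Fin d → ℝ)).symm ⁻¹' (Set.pi Set.univ (fun i => Set.Ico (0 : ℝ) (l i))) := by
    ext x; simp
  rw [h2, h, volume_pi_pi]
  simp only [Real.volume_Ico, sub_zero]
  rw [ENNReal.ofReal_prod_of_nonneg (fun i _ => hl i)]

open MeasureTheory in
lemma vol_translates {d : ℕ} (T : Set (Euc d)) (hT : NullMeasurableSet T volume) (M a : ℝ)
    (hM : 0 ≤ M) (ha : 0 < a) (i : Fin d) (hbox : ∀ x ∈ T, ∀ j, 0 ≤ x j ∧ x j < M)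
    (hdis : ∀ k : ℕ, 1 ≤ k → ∀ x ∈ T, x + ((k : ℝ) * a) • EuclideanSpace.single i (1 : ℝ) ∉ T) :
    (volume T).toReal ≤ M ^ (d - 1) * a ∧ volume T ≠ ⊤ := by
  have hfin : volume T ≠ ⊤ := by
    have : volume T ≤ volume {x : Euc d | ∀ j, 0 ≤ x j ∧ x j < (fun _ => M) j} :=
      measure_mono (fun x hx => hbox x hx)
    rw [vol_box _ (fun _ => hM)] at this
    exact ne_top_of_le_ne_top ENNReal.ofReal_ne_top this
  refine ⟨?_, hfin⟩
  set e : Euc d := EuclideanSpace.single i (1 : ℝ) with he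
  have key : ∀ m : ℕ, (m : ℝ) * (volume T).toReal ≤ M ^ (d - 1) * (M + m * a) := by
    intro m
    let S : Fin m → Set (Euc d) := fun k => (fun x => x + (-(((k : ℕ) : ℝ) * a) • e)) ⁻¹' T
    have hSm : ∀ k, NullMeasurableSet (S k) volume := fun k =>
      hT.preimage (measurePreserving_add_right volume _).quasiMeasurePreserving
    have hSv : ∀ k, volume (S k) = volume T := fun k =>
      (measurePreserving_add_right volume (-(((k : ℕ) : ℝ) * a) • e)).measure_preimage hT
    have hlt : ∀ k l : Fin m, k < l → Disjoint (S k) (S l) := by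
      intro k l hkl
      rw [Set.disjoint_left]
      intro x hxk hxl
      have hkl' : (k : ℕ) < l := hkl
      refine hdis ((l : ℕ) - k) (by omega) _ hxl ?_
      have : x + -(((l : ℕ) : ℝ) * a) • e + ((((l : ℕ) - (k : ℕ) : ℕ) : ℝ) * a) • e
          = x + -(((k : ℕ) : ℝ) * a) • e := by
        rw [Nat.cast_sub hkl'.le, add_assoc, ← add_smul]
        congr 2; ring
      rw [this]; exact hxk
    have hpd : Pairwise (Function.onFun (AEDisjoint volume) S) := by
      intro k l hkl
      rcases lt_or_gt_of_ne hkl with h | h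
      · exact (hlt k l h).aedisjoint
      · exact (hlt l k h).symm.aedisjoint
    have h1 : volume (⋃ k, S k) = m * volume T := by
      rw [measure_iUnion₀ hpd hSm, tsum_fintype]
      simp [hSv]
    have hsub : (⋃ k, S k) ⊆ {x : Euc d | ∀ j, 0 ≤ x j ∧ x j < (Function.update (fun _ => M) i (M + m * a)) j} := by
      intro x hx
      obtain ⟨k, hk⟩ := Set.mem_iUnion.1 hx
      intro j
      have h := hbox _ hk j
      have hk' : ((k : ℕ) : ℝ) ≤ m := by exact_mod_cast k.2.le
      have hk0 : (0 : ℝ) ≤ ((k : ℕ) : ℝ) := by positivity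
      by_cases hj : j = i
      · subst hj
        simp [he] at h ⊢
        constructor
        · nlinarith [mul_nonneg hk0 ha.le]
        · nlinarith
      · simp [he, hj] at h ⊢
        exact h
    have h2 := measure_mono (μ := volume) hsub
    rw [h1, vol_box] at h2
    · have hp : ∏ j, (Function.update (fun _ => M) i (M + m * a) : Fin d → ℝ) j = M ^ (d - 1) * (M + m * a) := by
        rw [Finset.prod_update_of_mem (Finset.mem_univ i)]
        simp [Finset.card_sdiff]
        ring
      rw [hp] at h2
      have h3 := ENNReal.toReal_mono ENNReal.ofReal_ne_top h2
      rw [ENNReal.toReal_ofReal (by positivity)] at h3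
      simpa using h3
    · intro j
      by_cases hj : j = i
      · subst hj; simp; positivity
      · simp [hj, hM]
  by_contra hcon
  push Not at hcon
  set v := (volume T).toReal
  obtain ⟨m, hm⟩ := exists_nat_gt (M ^ (d - 1) * M / (v - M ^ (d - 1) * a))
  rw [div_lt_iff₀ (by linarith)] at hm
  have := key m
  nlinarith

/-- partial boxes -/
def pbox {d : ℕ} (a : ℝ) (S : Finset (Fin d)) : Set (Euc d) :=
  {b | ∀ i, (i ∈ S → 0 ≤ b i ∧ b i < a) ∧ (i ∉ S → b i = 0)}

def outerS {d : ℕ} (C : Set (Euc d)) (a : ℝ) (S : Finset (Fin d)) : Set (Euc d) :=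
  {x | ∃ b ∈ pbox a S, x - b ∈ C}

def innerS {d : ℕ} (C : Set (Euc d)) (a : ℝ) (S : Finset (Fin d)) : Set (Euc d) :=
  {x | ∀ b ∈ pbox a S, x + b ∈ C}

lemma pbox_convex {d : ℕ} (a : ℝ) (S : Finset (Fin d)) : Convex ℝ (pbox (d := d) a S) := by
  intro x hx y hy s t hs ht hst i
  obtain ⟨h1, h2⟩ := hx i
  obtain ⟨h3, h4⟩ := hy i
  constructor
  · intro hi
    obtain ⟨h5, h6⟩ := h1 hi
    obtain ⟨h7, h8⟩ := h3 hi
    have := (convex_Ico (0 : ℝ) a) (⟨h5, h6⟩ : x i ∈ Set.Ico (0:ℝ) a) (⟨h7, h8⟩ : y i ∈ Set.Ico (0:ℝ) a) hs ht hst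
    simpa using this
  · intro hi
    simp [h2 hi, h4 hi]

lemma outer_convex {d : ℕ} {C : Set (Euc d)} (hC : Convex ℝ C) (a : ℝ) (S : Finset (Fin d)) :
    Convex ℝ (outerS C a S) := by
  rintro x ⟨b, hb, hx⟩ y ⟨c, hc, hy⟩ s t hs ht hst
  refine ⟨s • b + t • c, pbox_convex a S hb hc hs ht hst, ?_⟩
  have := hC hx hy hs ht hst
  convert this using 1
  simp only [smul_sub]; abel

lemma inner_convex {d : ℕ} {C : Set (Euc d)} (hC : Convex ℝ C) (a : ℝ) (S : Finset (Fin d)) :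
    Convex ℝ (innerS C a S) := by
  intro x hx y hy s t hs ht hst b hb
  have := hC (hx b hb) (hy b hb) hs ht hst
  convert this using 1
  have : b = (s + t) • b := by rw [hst, one_smul]
  nth_rewrite 1 [this]
  simp only [smul_add, add_smul]; abel

lemma pbox_split {d : ℕ} {a : ℝ} {S : Finset (Fin d)} {i : Fin d} (hi : i ∉ S) {b : Euc d}
    (hb : b ∈ pbox a (insert i S)) : 
    ∃ b' ∈ pbox a S, ∃ s : ℝ, 0 ≤ s ∧ s < a ∧ b = b' + s • EuclideanSpace.single i (1 : ℝ) := by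
  refine ⟨b - (b i) • EuclideanSpace.single i (1 : ℝ), ?_, b i, ((hb i).1 (by simp)).1, ((hb i).1 (by simp)).2, by abel⟩
  intro j
  by_cases hj : j = i
  · subst hj; simp [hi]
  · have := hb j
    simp [hj] at this ⊢
    exact this

lemma pbox_mono {d : ℕ} {a : ℝ} (ha : 0 < a) {S : Finset (Fin d)} {i : Fin d} (hi : i ∉ S) {b : Euc d}
    (hb : b ∈ pbox a S) : b ∈ pbox a (insert i S) := by
  intro j
  by_cases hj : j = i
  · subst hj; simp [(hb j).2 hi, ha]
  · have := hb j
    simp [hj] at this ⊢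
    exact this

lemma seg_mem {E : Type*} [AddCommGroup E] [Module ℝ E] {K : Set E} (hK : Convex ℝ K) (x e : E)
    {p q r : ℝ} (hp : x + p • e ∈ K) (hr : x + r • e ∈ K) (hpq : p ≤ q) (hqr : q ≤ r) :
    x + q • e ∈ K := by
  have hc : Convex ℝ {t : ℝ | x + t • e ∈ K} := by
    intro u hu v hv s t hs ht hst
    have := hK hu hv hs ht hst
    show x + (s • u + t • v) • e ∈ K
    convert this using 1
    have hx : x = (s + t) • x := by rw [hst, one_smul]
    nth_rewrite 1 [hx]
    simp only [smul_add, add_smul, smul_smul, smul_eq_mul]; abel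
  exact hc.ordConnected.out hp hr ⟨hpq, hqr⟩

open MeasureTheory in
lemma outer_vol {d : ℕ} {C : Set (Euc d)} (hC : Convex ℝ C) (hCc : C ⊆ halfOpenCube d)
    {a : ℝ} (ha : 0 < a) (S : Finset (Fin d)) :
    (volume (outerS C a S)) ≤ volume C + ENNReal.ofReal (S.card * ((1 + a) ^ (d - 1) * a)) := by
  classical
  induction S using Finset.induction_on with
  | empty =>
    have : outerS C a ∅ = C := by
      ext x
      constructor
      · rintro ⟨b, hb, hx⟩
        have : b = 0 := by ext j; exact (hb j).2 (by simp)
        simpa [this] using hx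
      · intro hx
        exact ⟨0, fun j => by simp, by simpa using hx⟩
    simp [this]
  | insert i S hi ih =>
    set K := outerS C a S with hK
    set K' := outerS C a (insert i S) with hK'
    have hKc : Convex ℝ K := outer_convex hC a S
    have hKc' : Convex ℝ K' := outer_convex hC a _
    set e : Euc d := EuclideanSpace.single i (1 : ℝ) with he
    have hstep : ∀ x ∈ K', ∃ s : ℝ, 0 ≤ s ∧ s < a ∧ x + (-s) • e ∈ K := by
      rintro x ⟨b, hb, hx⟩
      obtain ⟨b', hb', s, hs0, hsa, rfl⟩ := pbox_split hi hb
      refine ⟨s, hs0, hsa, b', hb', ?_⟩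
      convert hx using 1
      rw [neg_smul]; abel
    have hT := vol_translates (K' \ K) ((hKc'.nullMeasurableSet (μ := volume)).diff (hKc.nullMeasurableSet (μ := volume))) (1 + a) a
      (by positivity) ha i ?_ ?_
    · have hle : volume K' ≤ volume K + volume (K' \ K) := by
        refine (measure_mono ?_).trans (measure_union_le _ _)
        intro x hx
        by_cases hxK : x ∈ K
        · exact Or.inl hxK
        · exact Or.inr ⟨hx, hxK⟩
      refine hle.trans ((add_le_add ih (le_of_eq (ENNReal.ofReal_toReal hT.2).symm)).trans ?_)
      rw [add_assoc]
      gcongr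
      rw [← ENNReal.ofReal_add (by positivity) (by positivity)]
      apply ENNReal.ofReal_le_ofReal
      rw [Finset.card_insert_of_notMem hi]
      push_cast
      linarith [hT.1]
    · rintro x ⟨⟨b, hb, hx⟩, -⟩ j
      have h1 := hCc hx j
      have h2 : 0 ≤ b j ∧ b j < a := by
        by_cases hj : j ∈ insert i S
        · exact (hb j).1 hj
        · simp [(hb j).2 hj, ha]
      simp at h1
      constructor <;> linarith
    · rintro k hk x ⟨hx, hxK⟩ ⟨hy, hyK⟩
      obtain ⟨s, hs0, hsa, hs⟩ := hstep _ hx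
      obtain ⟨t, ht0, hta, ht⟩ := hstep _ hy
      rw [add_assoc, ← add_smul] at ht
      have hk1 : (1 : ℝ) ≤ k := by exact_mod_cast hk
      have := seg_mem hKc x e hs ht (q := 0) (by linarith) (by nlinarith)
      simp at this
      exact hxK this

open MeasureTheory in
lemma inner_vol {d : ℕ} {C : Set (Euc d)} (hC : Convex ℝ C) (hCc : C ⊆ halfOpenCube d)
    {a : ℝ} (ha : 0 < a) (S : Finset (Fin d)) :
    volume C ≤ (volume (innerS C a S)) + ENNReal.ofReal (S.card * ((1 + a) ^ (d - 1) * a)) := by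
  classical
  induction S using Finset.induction_on with
  | empty =>
    have : innerS C a ∅ = C := by
      ext x
      constructor
      · intro h
        simpa using h 0 (fun j => by simp)
      · intro hx b hb
        have : b = 0 := by ext j; exact (hb j).2 (by simp)
        simpa [this] using hx
    simp [this]
  | insert i S hi ih =>
    set K := innerS C a S with hK
    set K' := innerS C a (insert i S) with hK'
    have hKc : Convex ℝ K := inner_convex hC a S
    have hKc' : Convex ℝ K' := inner_convex hC a _
    set e : Euc d := EuclideanSpace.single i (1 : ℝ) with he
    have hstep : ∀ x, (∀ s : ℝ, 0 ≤ s → s < a → x + s • e ∈ K) → x ∈ K' := by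
      intro x h b hb
      obtain ⟨b', hb', s, hs0, hsa, rfl⟩ := pbox_split hi hb
      have := h s hs0 hsa b' hb'
      convert this using 1
      abel
    have hT := vol_translates (K \ K') ((hKc.nullMeasurableSet (μ := volume)).diff (hKc'.nullMeasurableSet (μ := volume))) (1 + a) a
      (by positivity) ha i ?_ ?_
    · have hle : volume K ≤ volume K' + volume (K \ K') := by
        refine (measure_mono ?_).trans (measure_union_le _ _)
        intro x hx
        by_cases hxK : x ∈ K'
        · exact Or.inl hxK
        · exact Or.inr ⟨hx, hxK⟩
      refine (ih.trans (add_le_add (hle.trans (add_le_add le_rfl (le_of_eq (ENNReal.ofReal_toReal hT.2).symm))) le_rfl)).trans ?_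
      rw [add_assoc]
      gcongr
      rw [← ENNReal.ofReal_add (by positivity) (by positivity)]
      apply ENNReal.ofReal_le_ofReal
      rw [Finset.card_insert_of_notMem hi]
      push_cast
      linarith [hT.1]
    · rintro x ⟨hx, -⟩ j
      have h0 : (0 : Euc d) ∈ pbox a S := fun j => by simp [ha]
      have h1 := hCc (hx 0 h0) j
      simp at h1
      constructor <;> linarith
    · rintro k hk x ⟨hx, hxK⟩ ⟨hy, hyK⟩
      apply hxK
      apply hstep
      intro s hs0 hsa
      have hk1 : (1 : ℝ) ≤ k := by exact_mod_cast hk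
      exact seg_mem hKc x e (p := 0) (by simpa using hx) hy hs0 (by nlinarith)

open MeasureTheory in
lemma lattice_setup {d : ℕ} (Λ : Set (Euc d)) (T : Matrix (Fin d) (Fin d) ℝ) (hT : IsLatticeOf Λ T) :
    ∃ b : Module.Basis (Fin d) ℝ (Euc d), Λ = (Submodule.span ℤ (Set.range b) : Set (Euc d)) ∧
      volume (ZSpan.fundamentalDomain b) = ENNReal.ofReal |T.det| := by
  obtain ⟨hu, hΛ⟩ := hT
  let e0 := EuclideanSpace.basisFun (Fin d) ℝ
  let e := e0.toBasis
  let v : Fin d → Euc d := fun j => WithLp.toLp 2 (fun i => T i j)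
  have hmat : e.toMatrix v = T := by
    ext i j
    simp [e, e0, Module.Basis.toMatrix_apply, v]
  have hdet : e.det v = T.det := by rw [Module.Basis.det_apply, hmat]
  obtain ⟨hli, hsp⟩ := (Module.Basis.is_basis_iff_det e).2 (hdet ▸ hu)
  let b := Module.Basis.mk hli hsp.ge
  have hb : (b : Fin d → Euc d) = v := Module.Basis.coe_mk _ _
  refine ⟨b, ?_, ?_⟩
  · rw [hΛ, hb]
    ext x
    simp only [Set.mem_ofPred_eq, SetLike.mem_coe]
    rw [Submodule.mem_span_range_iff_exists_fun]
    refine exists_congr fun k => ?_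
    constructor
    · intro h
      ext i
      rw [h i]
      simp [v, mul_comm]
    · intro h i
      rw [← h]
      simp [v, mul_comm]
  · rw [ZSpan.measure_fundamentalDomain b volume e, hb, hdet,
      measure_congr (ZSpan.fundamentalDomain_ae_parallelepiped e volume)]
    have : volume (parallelepiped e) = 1 := by
      have := e0.volume_parallelepiped
      simpa [e] using this
    rw [this, mul_one]

open MeasureTheory in
open scoped Pointwise in
lemma count_integral {d : ℕ} (b : Module.Basis (Fin d) ℝ (Euc d)) (A : Set (Euc d))
    (hA : NullMeasurableSet A volume) :
    volume A = ∫⁻ x in ZSpan.fundamentalDomain b,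
      (({g : Submodule.span ℤ (Set.range b) | x - (g : Euc d) ∈ A}.encard : ENat) : ENNReal) := by
  have hF := ZSpan.isAddFundamentalDomain' b (volume : Measure (Euc d))
  have : Countable (Submodule.span ℤ (Set.range b)).toAddSubgroup := by
    change Countable (Submodule.span ℤ (Set.range b))
    infer_instance
  rw [hF.measure_eq_tsum A]
  have h1 : ∀ g : (Submodule.span ℤ (Set.range b)).toAddSubgroup, 
     volume ((g +ᵥ A) ∩ ZSpan.fundamentalDomain b) = 
      ∫⁻ x in ZSpan.fundamentalDomain b, (g +ᵥ A).indicator 1 x := by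
    intro g
    have hm : NullMeasurableSet (g +ᵥ A) volume := hA.vadd g
    rw [lintegral_indicator_one₀ (hm.mono_ac Measure.restrict_le_self.absolutelyContinuous)]
    rw [Measure.restrict_apply₀ (hm.mono_ac Measure.restrict_le_self.absolutelyContinuous)]
  simp_rw [h1]
  rw [← lintegral_tsum]
  · refine lintegral_congr fun x => ?_
    rw [← ENNReal.tsum_set_one, tsum_subtype {g : Submodule.span ℤ (Set.range b) | x - (g : Euc d) ∈ A} (fun _ => (1 : ENNReal))]
    refine tsum_congr fun g => ?_
    have hiff : x ∈ g +ᵥ A ↔ x - (g : Euc d) ∈ A := by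
      rw [Set.mem_vadd_set_iff_neg_vadd_mem]
      have : -g +ᵥ x = x - (g : Euc d) := by
        change -(g : Euc d) + x = _
        abel
      rw [this]
    by_cases hx : x - (g : Euc d) ∈ A
    · rw [Set.indicator_of_mem (hiff.2 hx), Set.indicator_of_mem (by exact hx)]
      rfl
    · rw [Set.indicator_of_notMem (fun h => hx (hiff.1 h)), Set.indicator_of_notMem (by exact hx)]
  · intro g
    have hm : NullMeasurableSet (g +ᵥ A) volume := hA.vadd g
    exact (aemeasurable_const (b := (1 : ENNReal))).indicator₀ (hm.mono_ac Measure.restrict_le_self.absolutelyContinuous)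

open MeasureTheory in
lemma count_upper {d : ℕ} (b : Module.Basis (Fin d) ℝ (Euc d)) (C A B : Set (Euc d))
    (hA : NullMeasurableSet A volume)
    (hcov : ∀ x : Euc d, ∃ l ∈ Submodule.span ℤ (Set.range b), x - l ∈ B)
    (hAB : ∀ c ∈ C, ∀ y ∈ B, c + y ∈ A) :
    ((((Submodule.span ℤ (Set.range b) : Set (Euc d)) ∩ C).encard : ENat) : ENNReal) *
      volume (ZSpan.fundamentalDomain b) ≤ volume A := by
  rw [count_integral b A hA, ← setLIntegral_const]
  refine lintegral_mono fun x => ?_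
  obtain ⟨l, hl, hx⟩ := hcov x
  rw [ENat.toENNReal_le]
  have hsub : (Submodule.span ℤ (Set.range b) : Set (Euc d)) ∩ C ⊆
      (fun g : Submodule.span ℤ (Set.range b) => l - (g : Euc d)) ''
        {g : Submodule.span ℤ (Set.range b) | x - (g : Euc d) ∈ A} := by
    rintro c ⟨hc, hcC⟩
    refine ⟨⟨l - c, sub_mem hl hc⟩, ?_, by simp⟩
    have := hAB c hcC _ hx
    simp only [Set.mem_ofPred_eq]
    convert this using 1
    abel
  exact (Set.encard_le_encard hsub).trans (Set.encard_image_le _ _)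

open MeasureTheory in
lemma count_lower {d : ℕ} (b : Module.Basis (Fin d) ℝ (Euc d)) (C A B : Set (Euc d))
    (hA : NullMeasurableSet A volume)
    (hcov : ∀ x : Euc d, ∃ l ∈ Submodule.span ℤ (Set.range b), x - l ∈ B)
    (hAB : ∀ c ∈ A, ∀ y ∈ B, c + y ∈ C) :
    volume A ≤ ((((Submodule.span ℤ (Set.range b) : Set (Euc d)) ∩ C).encard : ENat) : ENNReal) *
      volume (ZSpan.fundamentalDomain b) := by
  rw [count_integral b A hA, ← setLIntegral_const]
  refine lintegral_mono fun x => ?_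
  obtain ⟨l, hl, hx⟩ := hcov (-x)
  rw [ENat.toENNReal_le]
  refine Set.encard_le_encard_of_injOn (f := fun g : Submodule.span ℤ (Set.range b) => -l - (g : Euc d)) ?_ ?_
  · intro g hg
    refine ⟨sub_mem (neg_mem hl) g.2, ?_⟩
    have := hAB _ hg _ hx
    change -l - (g : Euc d) ∈ C
    convert this using 1
    abel
  · intro g _ g' _ h
    simpa using h

lemma cover_of_span {d : ℕ} (b : Module.Basis (Fin d) ℝ (Euc d)) (L : ℝ) (hL : 0 < L)
    (hd : 1 ≤ d)
    (hsp : Submodule.span ℝ ((Submodule.span ℤ (Set.range b) : Set (Euc d)) ∩ Metric.closedBall 0 L) = ⊤) :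
    ∀ x : Euc d, ∃ l ∈ Submodule.span ℤ (Set.range b),
      x - l ∈ pbox (5 / 2 * (d * L)) (Finset.univ : Finset (Fin d)) := by
  intro x
  obtain ⟨t, hts, htsp, hli⟩ := exists_linearIndependent ℝ
    ((Submodule.span ℤ (Set.range b) : Set (Euc d)) ∩ Metric.closedBall 0 L)
  let v : Module.Basis t ℝ (Euc d) := Module.Basis.mk hli (by
    rw [Subtype.range_coe, htsp, hsp])
  have hv : ∀ i, v i = (i : Euc d) := fun i => by simp [v]
  have : Finite t := Module.Finite.finite_basis v
  have : Fintype t := Fintype.ofFinite t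
  have hcard : Fintype.card t = d := by
    rw [← Module.finrank_eq_card_basis v]; simp
  let c : Euc d := WithLp.toLp 2 (fun _ => (d : ℝ) * L)
  refine ⟨(ZSpan.floor v (x - c) : Euc d), ?_, ?_⟩
  · have h1 : Submodule.span ℤ (Set.range v) ≤ Submodule.span ℤ (Set.range b) := by
      rw [Submodule.span_le]
      rintro _ ⟨i, rfl⟩
      rw [hv]
      exact (hts i.2).1
    exact h1 (ZSpan.floor v (x - c)).2
  · have hn := ZSpan.norm_fract_le v (x - c)
    have hs : ∑ i, ‖v i‖ ≤ d * L := by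
      calc ∑ i, ‖v i‖ ≤ ∑ i : t, L := Finset.sum_le_sum (fun i _ => by
            rw [hv]; simpa using (hts i.2).2)
        _ = d * L := by simp [hcard]
    have hdL : 0 < (d : ℝ) * L := mul_pos (by exact_mod_cast hd) hL
    intro i
    refine ⟨fun _ => ?_, fun h => absurd (Finset.mem_univ i) h⟩
    have h1 : |(ZSpan.fract v (x - c)) i| ≤ d * L :=
      (PiLp.norm_apply_le (p := 2) (ZSpan.fract v (x - c)) i).trans (hn.trans hs)
    have h2 : (ZSpan.fract v (x - c)) i = (x - (ZSpan.floor v (x - c) : Euc d)) i - d * L := by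
      rw [ZSpan.fract_apply]
      simp [c]; ring
    rw [h2, abs_le] at h1
    constructor <;> linarith

open MeasureTheory in
lemma vol_obox {d : ℕ} (e : OrthonormalBasis (Fin d) ℝ (Euc d)) (l : Fin d → ℝ) (hl : ∀ i, 0 ≤ l i) :
    volume {x : Euc d | ∀ i, |e.repr x i| < l i} = ENNReal.ofReal (∏ i, (2 * l i)) := by
  have h := (EuclideanSpace.volume_preserving_symm_measurableEquiv_toLp (Fin d)).measure_preimage_equiv
    (Set.pi Set.univ (fun i => Set.Ioo (-l i) (l i)))
  have h3 := e.measurePreserving_repr.measure_preimage_emb e.repr.toHomeomorph.measurableEmbedding 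
    ((MeasurableEquiv.toLp 2 (Fin d → ℝ)).symm ⁻¹' (Set.pi Set.univ (fun i => Set.Ioo (-l i) (l i))))
  have h2 : {x : Euc d | ∀ i, |e.repr x i| < l i} =
      e.repr ⁻¹' ((MeasurableEquiv.toLp 2 (Fin d → ℝ)).symm ⁻¹' (Set.pi Set.univ (fun i => Set.Ioo (-l i) (l i)))) := by
    ext x; simp [abs_lt]
  rw [h2, h3, h, volume_pi_pi]
  simp only [Real.volume_Ioo]
  rw [ENNReal.ofReal_prod_of_nonneg (fun i _ => by linarith [hl i])]
  refine Finset.prod_congr rfl fun i _ => ?_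
  congr 1; ring

open MeasureTheory in
lemma span_top_of {d : ℕ} (hd : 1 ≤ d) (b : Module.Basis (Fin d) ℝ (Euc d)) (D lam ρ : ℝ)
    (hD : 0 ≤ D)
    (hvol : volume (ZSpan.fundamentalDomain b) = ENNReal.ofReal D) (hlam : 0 < lam) (hρ : 0 < ρ)
    (hmin : ∀ x ∈ Submodule.span ℤ (Set.range b), x ≠ 0 → lam ≤ ‖x‖)
    (hlt : D < ρ * (lam / √d) ^ (d - 1)) :
    Submodule.span ℝ ((Submodule.span ℤ (Set.range b) : Set (Euc d)) ∩
      Metric.closedBall 0 (√d * ρ)) = ⊤ := by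
  by_contra hne
  set W := Submodule.span ℝ ((Submodule.span ℤ (Set.range b) : Set (Euc d)) ∩
      Metric.closedBall 0 (√d * ρ)) with hW
  have hWo : Wᗮ ≠ ⊥ := fun h => hne ((Submodule.orthogonal_eq_bot_iff).1 h)
  obtain ⟨u, huW, hu0⟩ := Submodule.exists_mem_ne_zero_of_ne_bot hWo
  have hdr : (0 : ℝ) < d := by exact_mod_cast hd
  have hsd : 0 < √(d : ℝ) := Real.sqrt_pos.2 hdr
  let i0 : Fin d := ⟨0, hd⟩
  let w : Euc d := (‖u‖⁻¹ : ℝ) • u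
  have hw1 : ‖w‖ = 1 := by
    simp [w, norm_smul, hu0]
  have hwW : w ∈ Wᗮ := Wᗮ.smul_mem _ huW
  obtain ⟨e, he⟩ := Orthonormal.exists_orthonormalBasis_extension_of_card_eq (𝕜 := ℝ) (E := Euc d)
    (ι := Fin d) (by simp) (v := fun _ => w) (s := {i0}) (by
      constructor
      · intro i; simpa using hw1
      · rintro ⟨i, hi⟩ ⟨j, hj⟩ hij
        simp only [Set.mem_singleton_iff] at hi hj
        exact absurd (by simp [hi, hj]) hij)
  have he0 : e i0 = w := he i0 rfl
  set δ := lam / √d with hδ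
  have hδ0 : 0 < δ := by positivity
  have hdδ : (d : ℝ) * δ ^ 2 = lam ^ 2 := by
    rw [hδ, div_pow, Real.sq_sqrt hdr.le]; field_simp
  let l : Fin d → ℝ := Function.update (fun _ => δ) i0 ρ
  have hl0 : l i0 = ρ := by simp [l]
  have hlj : ∀ j, j ≠ i0 → l j = δ := fun j hj => by simp [l, hj]
  have hl : ∀ i, 0 ≤ l i := by
    intro i
    by_cases hi : i = i0
    · rw [hi, hl0]; exact hρ.le
    · rw [hlj i hi]; exact hδ0.le
  let K : Set (Euc d) := {x : Euc d | ∀ i, |e.repr x i| < l i}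
  have hprod : ∏ i, (2 * l i) = 2 ^ d * (ρ * δ ^ (d - 1)) := by
    rw [Finset.prod_mul_distrib]
    congr 1
    · simp
    · rw [Finset.prod_update_of_mem (Finset.mem_univ i0)]
      simp [Finset.card_sdiff]
  have : Countable (Submodule.span ℤ (Set.range b)).toAddSubgroup := by
    change Countable (Submodule.span ℤ (Set.range b))
    infer_instance
  obtain ⟨⟨x, hx⟩, hx0, hxK⟩ := exists_ne_zero_mem_lattice_of_measure_mul_two_pow_lt_measure
    (μ := (volume : Measure (Euc d))) (s := K)
    (ZSpan.isAddFundamentalDomain' b (volume : Measure (Euc d)))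
    (fun x hx i => by simpa using hx i)
    (by
      intro x hx y hy s t hs ht hst i
      have h1 := abs_lt.1 (hx i)
      have h2 := abs_lt.1 (hy i)
      have := (convex_Ioo (-l i) (l i)) (x := e.repr x i) h1 (y := e.repr y i) h2 hs ht hst
      rw [abs_lt]
      simpa using this)
    (by
      rw [vol_obox e l hl, hvol, hprod]
      have h2 : (2 : ENNReal) = ENNReal.ofReal 2 := by simp
      rw [finrank_euclideanSpace, Fintype.card_fin, h2, ← ENNReal.ofReal_pow (by norm_num),
        ← ENNReal.ofReal_mul hD]
      rw [ENNReal.ofReal_lt_ofReal_iff (by positivity)]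
      have : (0 : ℝ) < 2 ^ d := by positivity
      nlinarith)
  have hxne : x ≠ 0 := fun h => hx0 (by ext1; exact h)
  have hlow := hmin x hx hxne
  have hnorm : ‖x‖ ^ 2 = ∑ i, (e.repr x i) ^ 2 := by
    rw [← e.repr.norm_map x, EuclideanSpace.norm_sq_eq]
    simp
  have hbd : ∀ m : ℝ, 0 < m → (∀ i, |e.repr x i| < m) → ‖x‖ ^ 2 < d * m ^ 2 := by
    intro m hm h
    rw [hnorm]
    calc ∑ i, (e.repr x i) ^ 2 < ∑ i : Fin d, m ^ 2 := by
          refine Finset.sum_lt_sum_of_nonempty ⟨i0, Finset.mem_univ _⟩ fun i _ => ?_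
          exact sq_lt_sq' (abs_lt.1 (h i)).1 (abs_lt.1 (h i)).2
      _ = d * m ^ 2 := by simp
  have hcon : ∀ i, |e.repr x i| < δ := by
    intro i
    by_cases hi : i = i0
    · rcases le_or_gt ρ δ with h | h
      · have := hxK i
        rw [hi, hl0] at this
        rw [hi]; exact this.trans_le h
      · have h1 : ‖x‖ ^ 2 < d * ρ ^ 2 := hbd ρ hρ (fun j => by
          have := hxK j
          by_cases hj : j = i0
          · rwa [hj, hl0, ← hj] at this
          · rw [hlj j hj] at this; exact this.trans h)
        have h2 : ‖x‖ ≤ √d * ρ := by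
          refine le_of_sq_le_sq ?_ (by positivity)
          rw [mul_pow, Real.sq_sqrt hdr.le]; exact h1.le
        have hxW : x ∈ W := Submodule.subset_span ⟨hx, by simpa using h2⟩
        have h3 : e.repr x i0 = 0 := by
          rw [e.repr_apply_apply, he0]
          exact (Submodule.mem_orthogonal' _ _).1 hwW x hxW
        rw [hi, h3]; simpa using hδ0
    · have := hxK i
      rwa [hlj i hi] at this
  have := hbd δ hδ0 hcon
  rw [hdδ] at this
  nlinarith [norm_nonneg x]

lemma min_of_succMin {d : ℕ} (Λ : Set (Euc d)) (lam : ℝ) (h : lam ≤ succMin Λ 1) :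
    ∀ x ∈ Λ, x ≠ 0 → lam ≤ ‖x‖ := by
  intro x hx hx0
  refine h.trans (csInf_le ⟨0, fun r hr => hr.1.le⟩ ⟨norm_pos_iff.2 hx0, ?_⟩)
  rw [Nat.one_le_iff_ne_zero, Ne, Submodule.finrank_eq_zero, Submodule.span_eq_bot]
  intro hall
  exact hx0 (hall x ⟨hx, by simp⟩)

lemma gamma_le (d : ℕ) (hd : 1 ≤ d) : Real.Gamma (1 + (d : ℝ) / 2) ≤ d.factorial := by
  rcases Nat.lt_or_ge d 2 with h | h
  · have : d = 1 := by omega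
    subst this
    have h1 : Real.Gamma (1 + ((1 : ℕ) : ℝ) / 2) = √Real.pi / 2 := by
      rw [show (1 + ((1 : ℕ) : ℝ) / 2) = 1 / 2 + 1 by norm_num, Real.Gamma_add_one (by norm_num),
        Real.Gamma_one_half_eq]
      ring
    rw [h1]
    have : √Real.pi ≤ 2 := by
      rw [Real.sqrt_le_left (by norm_num)]
      linarith [Real.pi_le_four]
    simp; linarith
  · rw [← Real.Gamma_nat_eq_factorial]
    have h2 : (2 : ℝ) ≤ d := by exact_mod_cast h
    exact Real.Gamma_strictMonoOn_Ici.monotoneOn (by simp; linarith) (by simp; linarith) (by linarith)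

lemma num_ineq (d : ℕ) (hd : 1 ≤ d) : (3 : ℝ) * d ^ 2 ≤ (7 / 2) ^ d := by
  rcases Nat.lt_or_ge d 2 with h | h
  · have : d = 1 := by omega
    subst this; norm_num
  · induction d, h using Nat.le_induction with
    | base => norm_num
    | succ n hn ih =>
      have := ih (by omega)
      have h2 : (2 : ℝ) ≤ n := by exact_mod_cast hn
      rw [pow_succ (7 / 2 : ℝ)]; push_cast
      nlinarith

lemma pi_ineq (d : ℕ) : (7 / 2 : ℝ) ^ d ≤ 2 ^ d * Real.pi ^ ((d : ℝ) / 2) := by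
  have h : Real.pi ^ ((d : ℝ) / 2) = (√Real.pi) ^ d := by
    rw [Real.sqrt_eq_rpow, ← Real.rpow_natCast, ← Real.rpow_mul Real.pi_pos.le]
    congr 1; ring
  rw [h, ← mul_pow]
  have : (7 / 4 : ℝ) ≤ √Real.pi := by
    apply Real.le_sqrt_of_sq_le
    have := Real.pi_gt_d2
    norm_num at this ⊢
    linarith
  gcongr
  linarith

open MeasureTheory in
lemma disc_le {d : ℕ} (hd : 1 ≤ d) (N : ℕ) (hN : 1 ≤ N) (b : Module.Basis (Fin d) ℝ (Euc d))
    (hvol : volume (ZSpan.fundamentalDomain b) = ENNReal.ofReal (1 / N))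
    (hcard : ((Submodule.span ℤ (Set.range b) : Set (Euc d)) ∩ halfOpenCube d).ncard = N)
    (a : ℝ) (ha : 0 < a)
    (hcov : ∀ x : Euc d, ∃ l ∈ Submodule.span ℤ (Set.range b),
      x - l ∈ pbox a (Finset.univ : Finset (Fin d)))
    (C : Set (Euc d)) (hC : Convex ℝ C) (hCc : C ⊆ halfOpenCube d) :
    |((((Submodule.span ℤ (Set.range b) : Set (Euc d)) ∩ halfOpenCube d) ∩ C).ncard : ℝ) / N -
      (volume C).toReal| ≤ 3 * (d * a) := by
  set G : Set (Euc d) := (Submodule.span ℤ (Set.range b) : Set (Euc d)) with hG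
  have hNr : (0 : ℝ) < N := by exact_mod_cast hN
  have hfin : (G ∩ halfOpenCube d).Finite := Set.finite_of_ncard_ne_zero (by omega)
  have hset : (G ∩ halfOpenCube d) ∩ C = G ∩ C := by
    ext x; constructor
    · rintro ⟨⟨h1, h2⟩, h3⟩; exact ⟨h1, h3⟩
    · rintro ⟨h1, h3⟩; exact ⟨⟨h1, hCc h3⟩, h3⟩
  have hnN : (((G ∩ halfOpenCube d) ∩ C).ncard : ℝ) / N ≤ 1 := by
    rw [div_le_one hNr]
    have := Set.ncard_le_ncard (Set.inter_subset_left (s := G ∩ halfOpenCube d) (t := C)) hfin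
    rw [hcard] at this
    exact_mod_cast this
  have hvC : volume C ≤ 1 := by
    have := vol_box (d := d) (fun _ => 1) (fun _ => zero_le_one)
    simp only [Finset.prod_const_one, ENNReal.ofReal_one] at this
    rw [← this]
    exact measure_mono hCc
  have hvtop : volume C ≠ ⊤ := ne_top_of_le_ne_top ENNReal.one_ne_top hvC
  have hvC1 : (volume C).toReal ≤ 1 := by
    simpa using ENNReal.toReal_mono ENNReal.one_ne_top hvC
  have hv0 : 0 ≤ (volume C).toReal := ENNReal.toReal_nonneg
  have hn0 : 0 ≤ (((G ∩ halfOpenCube d) ∩ C).ncard : ℝ) / N := by positivity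
  rcases lt_or_ge 1 ((d : ℝ) * a) with hbig | hsmall
  · rw [abs_le]; constructor <;> linarith
  have hpow : (1 + a) ^ (d - 1) ≤ 3 := by
    calc (1 + a) ^ (d - 1) ≤ (1 + a) ^ d := pow_le_pow_right₀ (by linarith) (by omega)
      _ ≤ (Real.exp a) ^ d := by
        gcongr
        linarith [Real.add_one_le_exp a]
      _ = Real.exp (d * a) := by rw [← Real.exp_nat_mul]
      _ ≤ Real.exp 1 := Real.exp_le_exp.2 hsmall
      _ ≤ 3 := by linarith [Real.exp_one_lt_d9]
  have hE : (d : ℝ) * ((1 + a) ^ (d - 1) * a) ≤ 3 * (d * a) := by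
    have : 0 ≤ (d : ℝ) * a := by positivity
    nlinarith
  set E : ℝ := (d : ℝ) * ((1 + a) ^ (d - 1) * a) with hEdef
  have hE0 : 0 ≤ E := by positivity
  have hfin2 : (G ∩ C).Finite := hset ▸ hfin.subset Set.inter_subset_left
  have hval : (((G ∩ C).encard : ENat) : ENNReal) * ENNReal.ofReal (1 / N) =
      ENNReal.ofReal (((G ∩ C).ncard : ℝ) / N) := by
    rw [← hfin2.cast_ncard_eq]
    rw [ENat.toENNReal_coe, ← ENNReal.ofReal_natCast, ← ENNReal.ofReal_mul (by positivity)]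
    congr 1; ring
  have hup := count_upper b C (outerS C a Finset.univ) (pbox a Finset.univ)
    ((outer_convex hC a _).nullMeasurableSet (μ := volume)) hcov
    (fun c hc y hy => ⟨y, hy, by simpa using hc⟩)
  have hlo := count_lower b C (innerS C a Finset.univ) (pbox a Finset.univ)
    ((inner_convex hC a _).nullMeasurableSet (μ := volume)) hcov
    (fun c hc y hy => hc y hy)
  rw [hvol, hval] at hup hlo
  have h1 := hup.trans (outer_vol hC hCc ha Finset.univ)
  have h2 := (inner_vol hC hCc ha Finset.univ).trans (add_le_add hlo le_rfl)
  rw [hset] at hn0 hnN ⊢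
  simp only [Finset.card_univ, Fintype.card_fin] at h1 h2
  rw [← ENNReal.ofReal_toReal hvtop, ← ENNReal.ofReal_add hv0 hE0,
    ENNReal.ofReal_le_ofReal_iff (by linarith)] at h1
  rw [← ENNReal.ofReal_toReal hvtop, ← ENNReal.ofReal_add hn0 hE0,
    ENNReal.ofReal_le_ofReal_iff (by linarith)] at h2
  rw [abs_le]; constructor <;> linarith

theorem stmt11 {d : ℕ} (hd : 1 ≤ d) (N : ℕ) (hN : 1 ≤ N) (c₁ : ℝ) (hc : 0 < c₁)
    (Λ : Set (Euc d)) (T : Matrix (Fin d) (Fin d) ℝ) (hT : IsLatticeOf Λ T)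
    (hdet : |T.det| = 1 / N)
    (hlam : succMin Λ 1 ≥ c₁ * (N : ℝ) ^ (-(1 : ℝ) / d))
    (hcard : (Λ ∩ halfOpenCube d).ncard = N) :
    isoDisc (Λ ∩ halfOpenCube d) N ≤
      ((d : ℝ) ^ d * 2 ^ (d + 2) * (d.factorial : ℝ) * Real.pi ^ ((d : ℝ) / 2) /
          (c₁ ^ (d - 1) * Real.Gamma (1 + (d : ℝ) / 2))) *
        (N : ℝ) ^ (-(1 : ℝ) / d) := by
  classical
  obtain ⟨b, hΛ, hvol⟩ := lattice_setup Λ T hT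
  rw [hdet] at hvol
  have hNr : (0 : ℝ) < N := by exact_mod_cast hN
  have hdr : (0 : ℝ) < d := by exact_mod_cast hd
  have hd1 : (1 : ℝ) ≤ d := by exact_mod_cast hd
  have hsd : 0 < √(d : ℝ) := Real.sqrt_pos.2 hdr
  set t : ℝ := (N : ℝ) ^ (-(1 : ℝ) / d) with ht
  have ht0 : 0 < t := Real.rpow_pos_of_pos hNr _
  have htd : t * t ^ (d - 1) = 1 / N := by
    rw [mul_pow_sub_one (by omega), ht, ← Real.rpow_natCast, ← Real.rpow_mul hNr.le,
      div_mul_cancel₀ _ hdr.ne', Real.rpow_neg_one, one_div]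
  have hlam0 : 0 < c₁ * t := mul_pos hc ht0
  have hmin := min_of_succMin Λ (c₁ * t) hlam
  set ρ : ℝ := 3 / 2 * (1 / N) / (c₁ * t / √d) ^ (d - 1) with hρ
  have hρ0 : 0 < ρ := by positivity
  have hρval : ρ = 3 / 2 * t * (√d) ^ (d - 1) / c₁ ^ (d - 1) := by
    rw [hρ, ← htd, div_pow, mul_pow]
    field_simp
  have hsp := span_top_of hd b (1 / N) (c₁ * t) ρ (by positivity) hvol hlam0 hρ0
    (fun x hx => hmin x (hΛ ▸ hx)) (by
      rw [hρ, div_mul_cancel₀ _ (by positivity)]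
      have : (0 : ℝ) < 1 / N := by positivity
      linarith)
  have hcov := cover_of_span b (√d * ρ) (by positivity) hd hsp
  subst hΛ
  have hne : Nonempty {C : Set (Euc d) // Convex ℝ C ∧ C ⊆ halfOpenCube d} :=
    ⟨⟨∅, convex_empty, Set.empty_subset _⟩⟩
  refine ciSup_le fun C => ?_
  refine (disc_le hd N hN b hvol hcard _ (by positivity) hcov C C.2.1 C.2.2).trans ?_
  have hG : 0 < Real.Gamma (1 + (d : ℝ) / 2) := Real.Gamma_pos_of_pos (by positivity)
  have hGle := gamma_le d hd
  have hnum := (num_ineq d hd).trans (pi_ineq d)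
  have hsq : √(d : ℝ) ^ d ≤ (d : ℝ) ^ d := by
    gcongr
    rw [Real.sqrt_le_left hdr.le]
    nlinarith
  have hc' : 0 < c₁ ^ (d - 1) := by positivity
  have e1 : 3 * ((d : ℝ) * (5 / 2 * (d * (√d * ρ)))) =
      (45 / 4 * d ^ 2 * √d ^ d) / c₁ ^ (d - 1) * t := by
    rw [hρval, ← mul_pow_sub_one (show d ≠ 0 by omega) (√(d : ℝ))]
    ring
  rw [e1]
  gcongr ?_ * t
  rw [← div_div, div_right_comm]
  gcongr ?_ / c₁ ^ (d - 1)
  rw [le_div_iff₀ hG]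
  have hpi : 0 < Real.pi ^ ((d : ℝ) / 2) := Real.rpow_pos_of_pos Real.pi_pos _
  calc 45 / 4 * (d : ℝ) ^ 2 * √d ^ d * Real.Gamma (1 + (d : ℝ) / 2)
      ≤ (4 * (3 * (d : ℝ) ^ 2)) * (d : ℝ) ^ d * d.factorial := by
        have h45 : 45 / 4 * (d : ℝ) ^ 2 ≤ 4 * (3 * (d : ℝ) ^ 2) := by
          nlinarith [sq_nonneg (d : ℝ)]
        gcongr
    _ ≤ (4 * (2 ^ d * Real.pi ^ ((d : ℝ) / 2))) * (d : ℝ) ^ d * d.factorial := by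
        gcongr
    _ = _ := by ring

end
end

section
/- Let N be a prime number, let d ≥ 1, and let κ be an integer with 0 ≤ κ < N. Then the number of 'bad' parameters satisfies |{ a ∈ {1,…,N−1} : there exists a nonzero h ∈ ℤ^d with ‖h‖₁ ≤ κ and h_1 + h_2·a + ⋯ + h_d·a^{d−1} ≡ 0 (mod N) }| ≤ (d−1) · 2^d · binom(κ + d, d). -/
open scoped RealInnerProductSpace

noncomputable section

/-- The integer vectors of `ℓ₁`-norm at most `κ` lie in a finite set of the expected size. -/
theorem exists_l1_finset (d κ : ℕ) : ∃ H : Finset (Fin d → ℤ),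
    H.card ≤ 2 ^ d * Nat.choose (κ + d) d ∧
    ∀ h : Fin d → ℤ, ∑ i, (h i).natAbs ≤ κ → h ∈ H := by
  classical
  let S := (Finset.univ : Finset (Fin d → Bool)) ×ˢ
    (Finset.finsuppAntidiag (Finset.univ : Finset (Fin (d + 1))) κ)
  refine ⟨S.image (fun p i => if p.1 i then (p.2 i.succ : ℤ) else -(p.2 i.succ : ℤ)), ?_, ?_⟩
  · refine Finset.card_image_le.trans ?_
    have e : κ + d - κ = d := by omega
    have := Nat.choose_symm (n := κ + d) (k := κ) (by omega)
    rw [e] at this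
    simp only [S, Finset.card_product, Finset.card_finsuppAntidiag_nat_eq_multichoose,
      Nat.multichoose_eq, Finset.card_univ, Fintype.card_fin, Fintype.card_fun, Fintype.card_bool]
    rw [show d + 1 + κ - 1 = κ + d by omega, this]
  · intro h hh
    rw [Finset.mem_image]
    refine ⟨(fun i => decide (0 ≤ h i), Finsupp.equivFunOnFinite.symm
      (Fin.cons (κ - ∑ i, (h i).natAbs) (fun i => (h i).natAbs))), ?_, ?_⟩
    · simp only [S, Finset.mem_product, Finset.mem_univ, true_and, Finset.mem_finsuppAntidiag,
        Finset.subset_univ, and_true]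
      simp only [Finsupp.equivFunOnFinite_symm_apply_apply, Fin.sum_univ_succ, Fin.cons_zero,
        Fin.cons_succ]
      omega
    · funext i
      simp only [Finsupp.equivFunOnFinite_symm_apply_apply, Fin.cons_succ, decide_eq_true_eq]
      split_ifs with hs
      · exact Int.natAbs_of_nonneg hs
      · have := Int.ofNat_natAbs_of_nonpos (a := h i) (by omega)
        exact (congrArg Neg.neg this).trans (neg_neg _)

/-- The polynomial over `ZMod N` with coefficient vector `h`. -/
def hPoly (N : ℕ) {d : ℕ} (h : Fin d → ℤ) : Polynomial (ZMod N) :=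
  ∑ i : Fin d, Polynomial.C ((h i : ℤ) : ZMod N) * Polynomial.X ^ (i : ℕ)

theorem hPoly_ne_zero {N d κ : ℕ} (hκ : κ < N) (h : Fin d → ℤ) (h0 : h ≠ 0)
    (hh : ∑ i, (h i).natAbs ≤ κ) : hPoly N h ≠ 0 := by
  intro hz
  apply h0
  funext j
  have hc := congrArg (fun p => Polynomial.coeff p (j : ℕ)) hz
  simp only [hPoly, Polynomial.finsetSum_coeff, Polynomial.coeff_C_mul, Polynomial.coeff_X_pow,
    Polynomial.coeff_zero, Fin.val_inj, mul_ite, mul_one, mul_zero, Finset.sum_ite_eq,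
    Finset.mem_univ, if_true] at hc
  rw [CharP.intCast_eq_zero_iff (ZMod N) N] at hc
  have hj : (h j).natAbs ≤ ∑ i, (h i).natAbs :=
    Finset.single_le_sum (f := fun i => (h i).natAbs) (fun _ _ => Nat.zero_le _) (Finset.mem_univ j)
  exact Int.eq_zero_of_dvd_of_natAbs_lt_natAbs hc (by simp; omega)

theorem hPoly_card_roots {N d : ℕ} [Fact N.Prime] (hd : 1 ≤ d) (h : Fin d → ℤ)
    (hp : hPoly N h ≠ 0) : (hPoly N h).roots.toFinset.card ≤ d - 1 := by
  refine (Multiset.toFinset_card_le _).trans ((Polynomial.card_roots' _).trans ?_)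
  have := (Polynomial.natDegree_lt_iff_degree_lt hp).2
    (Polynomial.degree_sum_fin_lt (fun i => ((h i : ℤ) : ZMod N)))
  omega

theorem stmt16 (N : ℕ) (hN : N.Prime) (d : ℕ) (hd : 1 ≤ d) (κ : ℕ) (hκ : κ < N) :
    { a : ℕ | 1 ≤ a ∧ a ≤ N - 1 ∧ ∃ h : Fin d → ℤ, h ≠ 0 ∧
        (∑ i, (h i).natAbs ≤ κ) ∧
        (N : ℤ) ∣ ∑ i, h i * (a : ℤ) ^ (i : ℕ) }.ncard ≤
      (d - 1) * 2 ^ d * Nat.choose (κ + d) d := by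
  classical
  haveI : Fact N.Prime := ⟨hN⟩
  obtain ⟨H, hHc, hH⟩ := exists_l1_finset d κ
  let B := (H.filter (fun h => hPoly N h ≠ 0)).biUnion
    (fun h => (hPoly N h).roots.toFinset.image ZMod.val)
  have hsub : { a : ℕ | 1 ≤ a ∧ a ≤ N - 1 ∧ ∃ h : Fin d → ℤ, h ≠ 0 ∧
        (∑ i, (h i).natAbs ≤ κ) ∧
        (N : ℤ) ∣ ∑ i, h i * (a : ℤ) ^ (i : ℕ) } ⊆ (B : Set ℕ) := by
    rintro a ⟨ha1, ha2, h, h0, hk, hdvd⟩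
    have hne := hPoly_ne_zero hκ h h0 hk
    simp only [B, Finset.mem_coe, Finset.mem_biUnion, Finset.mem_filter, Finset.mem_image,
      Multiset.mem_toFinset]
    refine ⟨h, ⟨hH h hk, hne⟩, (a : ZMod N), ?_, ZMod.val_natCast_of_lt (by omega)⟩
    rw [Polynomial.mem_roots hne, Polynomial.IsRoot.def]
    rw [← CharP.intCast_eq_zero_iff (ZMod N) N] at hdvd
    push_cast at hdvd
    simpa [hPoly, Polynomial.eval_finsetSum] using hdvd
  refine (Set.ncard_le_ncard hsub B.finite_toSet).trans ?_
  rw [Set.ncard_coe_finset]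
  have h1 : B.card ≤ (H.filter (fun h => hPoly N h ≠ 0)).card * (d - 1) :=
    Finset.card_biUnion_le_card_mul _ _ _ (fun h hh =>
      Finset.card_image_le.trans (hPoly_card_roots hd h (Finset.mem_filter.1 hh).2))
  calc B.card ≤ _ := h1
    _ ≤ (2 ^ d * Nat.choose (κ + d) d) * (d - 1) :=
      Nat.mul_le_mul_right _ ((Finset.card_filter_le _ _).trans hHc)
    _ = _ := by ring

end
end

section
/- Let N be a prime number, let d ≥ 1, and let κ be an integer with 0 ≤ κ < N such that (d−1) · 2^d · binom(κ + d, d) < N − 1. Then there exists a parameter a ∈ {1,…,N−1} such that every nonzero h ∈ ℤ^d with h_1 + h_2·a + ⋯ + h_d·a^{d−1} ≡ 0 (mod N) satisfies ‖h‖₁ > κ. Consequently, for this a, the dual lattice Λ⊥ = { h ∈ ℤ^d : h·(1,a,…,a^{d−1}) ≡ 0 (mod N) } of the Korobov lattice Λ = (1/N)(1,a,…,a^{d−1})ℤ + ℤ^d satisfies λ₁(Λ⊥) ≥ κ/√d. -/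
open scoped RealInnerProductSpace

noncomputable section

theorem stmt17_cover (d κ : ℕ) : ∃ S : Finset (Fin d → ℤ),
    S.card ≤ 2 ^ d * Nat.choose (κ + d) d ∧
    ∀ h : Fin d → ℤ, ∑ i, (h i).natAbs ≤ κ → h ∈ S := by
  classical
  let A := (Finset.finsuppAntidiag (Finset.univ : Finset (Fin (d + 1))) κ) ×ˢ
    (Finset.univ : Finset (Fin d → Bool))
  refine ⟨A.image (fun p i => if p.2 i then (p.1 i.succ : ℤ) else -(p.1 i.succ : ℤ)), ?_, ?_⟩
  · refine Finset.card_image_le.trans ?_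
    have hc : (κ + d).choose κ = (κ + d).choose d := Nat.choose_symm_add
    simp only [A, Finset.card_product, Finset.card_finsuppAntidiag_nat_eq_choose]
    simp only [Finset.card_univ, Fintype.card_fin, Fintype.card_fun, Fintype.card_bool]
    rw [← hc, show d + 1 + κ - 1 = κ + d by omega, mul_comm]
  · intro h hh
    rw [Finset.mem_image]
    refine ⟨(Finsupp.equivFunOnFinite.symm
      (Fin.cons (κ - ∑ i, (h i).natAbs) (fun i => (h i).natAbs)), fun i => decide (0 ≤ h i)),
      ?_, ?_⟩
    · simp only [A, Finset.mem_product, Finset.mem_univ, and_true, Finset.mem_finsuppAntidiag]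
      refine ⟨?_, Finset.subset_univ _⟩
      simp [Fin.sum_univ_succ]
      omega
    · funext i
      simp only [Finsupp.equivFunOnFinite_symm_apply_apply, Fin.cons_succ, decide_eq_true_eq]
      rcases le_or_gt 0 (h i) with hi | hi
      · simp [hi, abs_of_nonneg]
      · simp [not_le.2 hi, abs_of_neg hi]

theorem stmt17_exists (N : ℕ) (hN : N.Prime) (d : ℕ) (hd : 1 ≤ d) (κ : ℕ) (hκ : κ < N)
    (hcount : (d - 1) * 2 ^ d * Nat.choose (κ + d) d < N - 1) :
    ∃ a : ℕ, 1 ≤ a ∧ a ≤ N - 1 ∧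
      (∀ h : Fin d → ℤ, h ≠ 0 → ((N : ℤ) ∣ ∑ i, h i * (a : ℤ) ^ (i : ℕ)) →
        κ < ∑ i, (h i).natAbs) := by
  classical
  haveI : Fact N.Prime := ⟨hN⟩
  obtain ⟨S, hS, hmem⟩ := stmt17_cover d κ
  let P : (Fin d → ℤ) → Polynomial (ZMod N) := fun h =>
    ∑ i, Polynomial.C (h i : ZMod N) * Polynomial.X ^ (i : ℕ)
  let B := S.biUnion (fun h => (P h).roots.toFinset)
  have hdeg : ∀ h, (P h).natDegree ≤ d - 1 := by
    intro h
    refine Polynomial.natDegree_sum_le_of_forall_le _ _ ?_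
    intro i _
    refine (Polynomial.natDegree_C_mul_X_pow_le _ _).trans ?_
    have := i.2
    omega
  have hB : B.card < N - 1 := by
    refine lt_of_le_of_lt ?_ hcount
    refine (Finset.card_biUnion_le_card_mul S _ (d - 1) ?_).trans ?_
    · intro h _
      exact (Multiset.toFinset_card_le _).trans ((Polynomial.card_roots' _).trans (hdeg h))
    · calc S.card * (d - 1) ≤ (2 ^ d * Nat.choose (κ + d) d) * (d - 1) :=
            Nat.mul_le_mul_right _ hS
        _ = _ := by ring
  have hE : ((Finset.univ : Finset (ZMod N)).erase 0).card = N - 1 := by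
    rw [Finset.card_erase_of_mem (Finset.mem_univ _), Finset.card_univ, ZMod.card]
  obtain ⟨a, ha, haB⟩ := Finset.exists_mem_notMem_of_card_lt_card (hE.symm ▸ hB)
  have ha0 : a ≠ 0 := Finset.ne_of_mem_erase ha
  have hv : a.val ≠ 0 := by rwa [Ne, ZMod.val_eq_zero]
  have hlt := ZMod.val_lt a
  refine ⟨a.val, by omega, by omega, ?_⟩
  intro h h0 hdvd
  by_contra hle
  push Not at hle
  apply haB
  simp only [B, Finset.mem_biUnion, Multiset.mem_toFinset]
  refine ⟨h, hmem h hle, ?_⟩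
  rw [Polynomial.mem_roots']
  constructor
  · intro hP
    apply h0
    funext i
    have hc : (P h).coeff (i : ℕ) = (h i : ZMod N) := by
      simp only [P, Polynomial.finset_sum_coeff, Polynomial.coeff_C_mul_X_pow]
      rw [Finset.sum_eq_single i]
      · simp
      · intro j _ hj
        rw [if_neg]
        intro hij
        exact hj (Fin.ext hij.symm)
      · simp
    rw [hP, Polynomial.coeff_zero] at hc
    have hd' : (N : ℤ) ∣ h i := (ZMod.intCast_zmod_eq_zero_iff_dvd _ _).1 hc.symm
    have hi : (h i).natAbs ≤ κ :=
      (Finset.single_le_sum (f := fun i => (h i).natAbs) (fun _ _ => Nat.zero_le _)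
        (Finset.mem_univ i)).trans hle
    exact Int.eq_zero_of_abs_lt_dvd hd' (by rw [Int.abs_eq_natAbs]; omega)
  · have hz := (ZMod.intCast_zmod_eq_zero_iff_dvd _ N).2 hdvd
    push_cast at hz
    rw [ZMod.natCast_zmod_val] at hz
    simpa [P, Polynomial.IsRoot, Polynomial.eval_finset_sum] using hz

theorem stmt17 (N : ℕ) (hN : N.Prime) (d : ℕ) (hd : 1 ≤ d) (κ : ℕ) (hκ : κ < N)
    (hcount : (d - 1) * 2 ^ d * Nat.choose (κ + d) d < N - 1) :
    ∃ a : ℕ, 1 ≤ a ∧ a ≤ N - 1 ∧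
      (∀ h : Fin d → ℤ, h ≠ 0 → ((N : ℤ) ∣ ∑ i, h i * (a : ℤ) ^ (i : ℕ)) →
        κ < ∑ i, (h i).natAbs) ∧
      succMin { y : Euc d | ∃ h : Fin d → ℤ, (∀ i, y i = (h i : ℝ)) ∧
          (N : ℤ) ∣ ∑ i, h i * (a : ℤ) ^ (i : ℕ) } 1 ≥ (κ : ℝ) / Real.sqrt d := by
  obtain ⟨a, h1, h2, h3⟩ := stmt17_exists N hN d hd κ hκ hcount
  refine ⟨a, h1, h2, h3, ?_⟩
  have hdpos : (0 : ℝ) < d := by exact_mod_cast hd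
  have hNpos : (0 : ℝ) < N := by exact_mod_cast hN.pos
  unfold succMin
  apply le_csInf
  · refine ⟨N, hNpos, ?_⟩
    rw [Nat.one_le_iff_ne_zero, Ne, Submodule.finrank_eq_zero, Submodule.span_eq_bot]
    intro hall
    let i0 : Fin d := ⟨0, hd⟩
    have := hall (EuclideanSpace.single i0 (N : ℝ)) ⟨⟨Pi.single i0 (N : ℤ), ?_, ?_⟩, ?_⟩
    · have h0 := congrArg (fun v : Euc d => v i0) this
      simp at h0
      exact hN.ne_zero h0
    · intro i
      by_cases hi : i = i0
      · subst hi; simp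
      · simp [hi]
    · rw [Finset.sum_eq_single i0]
      · simp
      · intro j _ hj
        simp [hj]
      · simp
    · simp
  · rintro r ⟨hr, hfin⟩
    rw [Nat.one_le_iff_ne_zero, Ne, Submodule.finrank_eq_zero, Submodule.span_eq_bot] at hfin
    push Not at hfin
    obtain ⟨y, ⟨⟨h, hy, hdvd⟩, hball⟩, hy0⟩ := hfin
    have hh0 : h ≠ 0 := by
      rintro rfl
      apply hy0
      ext i
      simp [hy i]
    have hκ' := h3 h hh0 hdvd
    have hn : ‖y‖ ≤ r := by simpa using hball
    refine le_trans ?_ hn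
    rw [div_le_iff₀ (Real.sqrt_pos.2 hdpos), EuclideanSpace.norm_eq, ← Real.sqrt_mul
      (Finset.sum_nonneg fun i _ => sq_nonneg _)]
    apply Real.le_sqrt_of_sq_le
    have hcs := sq_sum_le_card_mul_sum_sq (s := (Finset.univ : Finset (Fin d)))
      (f := fun i => ‖y i‖)
    have hs : ((∑ i, (h i).natAbs : ℕ) : ℝ) = ∑ i, ‖y i‖ := by
      push_cast
      refine Finset.sum_congr rfl fun i _ => ?_
      rw [hy i, Nat.cast_natAbs, Real.norm_eq_abs, Int.cast_abs]
    have hle : (κ : ℝ) ≤ ∑ i, ‖y i‖ := by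
      rw [← hs]; exact_mod_cast hκ'.le
    rw [Finset.card_univ, Fintype.card_fin] at hcs
    calc (κ : ℝ) ^ 2 ≤ (∑ i, ‖y i‖) ^ 2 := by gcongr
      _ ≤ _ := hcs
      _ = _ := mul_comm _ _
end
end

section
/- For every dimension d ≥ 1 there exists a constant c(d) > 0, independent of N, such that for every prime number N there exists a parameter a ∈ {1,…,N−1} for which the Korobov lattice Λ = (1/N)(1,a,a²,…,a^{d−1})ℤ + ℤ^d satisfies λ₁(Λ⊥) ≥ c(d) · N^{1/d}. Consequently, the mesh ratio of this lattice satisfies ρ(Λ) ≤ d · C_d · N / (λ₁(Λ⊥))^d ≤ d · C_d / (c(d))^d, a bound independent of N, where C_d = 2^d Γ(1+d/2)/π^{d/2}. -/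
open scoped RealInnerProductSpace

noncomputable section

/-- The Korobov lattice `Λ = (1/N)(1, a, a², …, a^{d-1})ℤ + ℤ^d ⊂ ℝ^d`. -/
def korobovLat (d N a : ℕ) : Set (Euc d) :=
  { v | ∃ n : ℤ, ∃ m : Fin d → ℤ,
      ∀ i, v i = (n : ℝ) * (a : ℝ) ^ (i : ℕ) / N + (m i : ℝ) }

open MeasureTheory in
lemma mink_aux {n : ℕ} (hn : 0 < n) (T : Matrix (Fin n) (Fin n) ℝ) (hT : T.det ≠ 0)
    (K : Set (Fin n → ℝ)) (hsymm : ∀ x ∈ K, -x ∈ K) (hconv : Convex ℝ K)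
    (h : (ENNReal.ofReal |T.det| * 2 ^ n < volume K) ∨
      (IsCompact K ∧ ENNReal.ofReal |T.det| * 2 ^ n ≤ volume K)) :
    ∃ k : Fin n → ℤ, k ≠ 0 ∧ T.mulVec (fun i => (k i : ℝ)) ∈ K := by
  classical
  have : Nonempty (Fin n) := ⟨⟨0, hn⟩⟩
  have : Nontrivial (Fin n → ℝ) := inferInstance
  set b := Pi.basisFun ℝ (Fin n) with hb
  have hdetf : LinearMap.det (Matrix.toLin' T) ≠ 0 := by rwa [LinearMap.det_toLin']
  have hfd := ZSpan.isAddFundamentalDomain b (volume : Measure (Fin n → ℝ))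
  have hvol1 : volume (ZSpan.fundamentalDomain b) = 1 := by
    rw [ZSpan.volume_fundamentalDomain]
    have : (Matrix.of ⇑b) = (1 : Matrix (Fin n) (Fin n) ℝ) := by
      ext i j
      simp [hb, Matrix.one_apply, Pi.single_apply, eq_comm]
    rw [this]; simp
  set s := (Matrix.toLin' T) ⁻¹' K with hs
  have hvs : volume s = ENNReal.ofReal |(T.det)⁻¹| * volume K := by
    rw [hs, Measure.addHaar_preimage_linearMap _ hdetf, LinearMap.det_toLin']
  have hmul : ENNReal.ofReal |(T.det)⁻¹| * (ENNReal.ofReal |T.det| * 2 ^ n) = 2 ^ n := by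
    rw [← mul_assoc, ← ENNReal.ofReal_mul (abs_nonneg _), ← abs_mul, inv_mul_cancel₀ hT]
    simp
  have hpos : ENNReal.ofReal |(T.det)⁻¹| ≠ 0 := by
    simp [hT]
  have hsymm' : ∀ x ∈ s, -x ∈ s := by
    intro x hx
    simp only [hs, Set.mem_preimage, map_neg] at hx ⊢
    exact hsymm _ hx
  have hconv' : Convex ℝ s := hconv.linear_preimage _
  have key : ∃ x : (Submodule.span ℤ (Set.range b)).toAddSubgroup, x ≠ 0 ∧ (x : Fin n → ℝ) ∈ s := by
    have : Countable (Submodule.span ℤ (Set.range b)).toAddSubgroup :=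
      inferInstanceAs (Countable (Submodule.span ℤ (Set.range b)))
    have : DiscreteTopology (Submodule.span ℤ (Set.range b)).toAddSubgroup :=
      inferInstanceAs (DiscreteTopology (Submodule.span ℤ (Set.range b)))
    rcases h with h | ⟨hc, h⟩
    · refine exists_ne_zero_mem_lattice_of_measure_mul_two_pow_lt_measure
        (μ := volume) (F := ZSpan.fundamentalDomain b) hfd hsymm' hconv' ?_
      rw [hvol1, hvs, one_mul, Module.finrank_fin_fun]
      conv_lhs => rw [← hmul]
      exact ENNReal.mul_lt_mul_right hpos ENNReal.ofReal_ne_top h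
    · refine exists_ne_zero_mem_lattice_of_measure_mul_two_pow_le_measure
        (μ := volume) (F := ZSpan.fundamentalDomain b) hfd hsymm' hconv' ?_ ?_
      · let e := LinearEquiv.ofIsUnitDet (f := Matrix.toLin' T) (v := b) (v' := b)
          (by simpa [hb] using hT)
        have : s = e.toContinuousLinearEquiv.toHomeomorph ⁻¹' K := rfl
        rw [this]
        exact (Homeomorph.isCompact_preimage _).2 hc
      · rw [hvol1, hvs, one_mul, Module.finrank_fin_fun]
        conv_lhs => rw [← hmul]
        gcongr
  obtain ⟨⟨x, hxL⟩, hx0, hxs⟩ := key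
  have hx := (b.mem_span_iff_repr_mem ℤ x).1 hxL
  choose k hk using hx
  have hxk : x = fun i => (k i : ℝ) := by
    funext i
    have := hk i
    simp [hb] at this
    exact this.symm
  refine ⟨k, ?_, ?_⟩
  · rintro rfl
    apply hx0
    ext i
    simp [hxk]
  · rw [← hxk]
    simpa [hs] using hxs

open MeasureTheory in
lemma linforms {n : ℕ} (hn : 0 < n) (T : Matrix (Fin n) (Fin n) ℝ) (r : ℝ) (hr : 0 < r)
    (hT : |T.det| = r ^ n) :
    ∃ k : Fin n → ℤ, k ≠ 0 ∧ ∀ i, |T.mulVec (fun i => (k i : ℝ)) i| ≤ r := by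
  have h0 : T.det ≠ 0 := by
    intro h
    rw [h, abs_zero] at hT
    exact (pow_pos hr n).ne hT
  obtain ⟨k, hk, hm⟩ := mink_aux hn T h0 (Metric.closedBall 0 r) (by simp)
    (convex_closedBall _ _) (Or.inr ⟨isCompact_closedBall _ _, by
      rw [Real.volume_pi_closedBall _ hr.le, hT, Fintype.card_fin, mul_pow, mul_comm,
        ENNReal.ofReal_mul (p := 2 ^ n) (by positivity), ENNReal.ofReal_pow (p := 2) (by norm_num) n]
      simp⟩)
  refine ⟨k, hk, ?_⟩
  intro i
  rw [mem_closedBall_zero_iff, pi_norm_le_iff_of_nonneg hr.le] at hm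
  exact hm i

lemma onb_norm_le {E : Type*} [NormedAddCommGroup E] [InnerProductSpace ℝ E] {n : ℕ}
    (e : OrthonormalBasis (Fin n) ℝ E) (w : Fin n → ℝ) (r : ℝ) (hr : 0 ≤ r)
    (hw : ∀ i, |w i| ≤ r) : ‖∑ i, w i • e i‖ ≤ Real.sqrt n * r := by
  have h1 : ‖∑ i, w i • e i‖ ^ 2 = ∑ i, w i ^ 2 := by
    have := e.repr.symm.norm_map (WithLp.toLp 2 w)
    rw [← e.sum_repr_symm] at this
    simp only [] at this
    rw [this, EuclideanSpace.norm_sq_eq]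
    simp
  apply abs_le_of_sq_le_sq' _ (by positivity) |>.2
  rw [h1, mul_pow, Real.sq_sqrt (by positivity)]
  calc ∑ i, w i ^ 2 ≤ ∑ i : Fin n, r ^ 2 := by
        apply Finset.sum_le_sum
        intro i _
        exact sq_le_sq' (by linarith [abs_le.1 (hw i)]) (abs_le.1 (hw i)).2
    _ = n * r ^ 2 := by simp

lemma short_vec {E : Type*} [NormedAddCommGroup E] [InnerProductSpace ℝ E]
    [FiniteDimensional ℝ E] {n : ℕ} (hn : 0 < n) (hE : Module.finrank ℝ E = n)
    (L : AddSubgroup E) (μ : ℝ) (hμ : 0 < μ)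
    (hd : ∀ y : E, (∀ x ∈ L, ∃ m : ℤ, ⟪x, y⟫ = (m : ℝ)) → y ≠ 0 → μ ≤ ‖y‖) :
    ∃ v ∈ L, v ≠ 0 ∧ ‖v‖ ≤ n / μ := by
  classical
  by_contra! hcon
  set M : Submodule ℤ E := AddSubgroup.toIntSubmodule L with hM
  have hpos : 0 < (n : ℝ) / μ := by positivity
  have : DiscreteTopology M := by
    rw [discreteTopology_iff_isOpen_singleton_zero, Metric.isOpen_singleton_iff]
    refine ⟨n / μ, hpos, ?_⟩
    rintro ⟨y, hy⟩ hdist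
    by_contra hne
    have hy0 : y ≠ 0 := fun h => hne (by ext; exact h)
    have := hcon y hy hy0
    rw [Subtype.dist_eq] at hdist
    simp at hdist
    linarith
  have hspan : Submodule.span ℝ (M : Set E) = ⊤ := by
    by_contra hne
    have h1 : (Submodule.span ℝ (M : Set E))ᗮ ≠ ⊥ := by
      rwa [Ne, Submodule.orthogonal_eq_bot_iff]
    obtain ⟨y, hy, hy0⟩ := Submodule.exists_mem_ne_zero_of_ne_bot h1
    have hny : 0 < ‖y‖ := norm_pos_iff.2 hy0
    have := hd ((μ / 2 / ‖y‖) • y) (by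
      intro x hx
      refine ⟨0, ?_⟩
      rw [inner_smul_right, (Submodule.mem_orthogonal _ _).1 hy x (Submodule.subset_span hx)]
      simp) (smul_ne_zero (by positivity) hy0)
    rw [norm_smul, Real.norm_of_nonneg (by positivity), div_mul_cancel₀ _ hny.ne'] at this
    linarith
  have : IsZLattice ℝ M := ⟨hspan⟩
  have : Module.Free ℤ M := ZLattice.module_free ℝ M
  have : Module.Finite ℤ M := ZLattice.module_finite ℝ M
  let b0 : Module.Basis (Fin n) ℤ M :=
    (Module.finBasis ℤ M).reindex (finCongr (by rw [ZLattice.rank ℝ M, hE]))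
  let b := b0.ofZLatticeBasis ℝ M
  have hbapp : ∀ i, b i = (b0 i : E) := fun i => Module.Basis.ofZLatticeBasis_apply ℝ M b0 i
  let e : OrthonormalBasis (Fin n) ℝ E := (stdOrthonormalBasis ℝ E).reindex (finCongr hE)
  set T := e.toBasis.toMatrix b with hTdef
  have hdet : T.det ≠ 0 := by
    have := e.toBasis.isUnit_det b
    rw [Module.Basis.det_apply] at this
    exact this.ne_zero
  set r : ℝ := |T.det| ^ ((1 : ℝ) / n) with hr
  have hrpos : 0 < r := by positivity
  have hrn : |T.det| = r ^ n := by
    rw [hr, ← Real.rpow_natCast, ← Real.rpow_mul (abs_nonneg _), one_div,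
      inv_mul_cancel₀ (by positivity), Real.rpow_one]
  have hTe : ∀ j, b j = ∑ i, T i j • e i := by
    intro j
    have := e.toBasis.sum_toMatrix_smul_self b j
    rw [← this]; simp [hTdef]
  obtain ⟨k, hk0, hk⟩ := linforms hn T r hrpos hrn
  obtain ⟨l, hl0, hl⟩ := linforms hn T⁻¹.transpose r⁻¹ (by positivity) (by
    rw [Matrix.det_transpose, Matrix.det_nonsing_inv, Ring.inverse_eq_inv', abs_inv, hrn, inv_pow])
  -- vector in L
  set v : E := ∑ j, (k j) • (b0 j : E) with hv
  have hvM : v ∈ L := by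
    apply sum_mem
    intro j _
    exact L.zsmul_mem (b0 j).2 _
  have hveq : v = ∑ i, (T.mulVec (fun i => (k i : ℝ))) i • e i := by
    rw [hv]
    simp_rw [← hbapp, hTe, Matrix.mulVec, dotProduct, Finset.sum_smul, Finset.smul_sum]
    rw [Finset.sum_comm]
    refine Finset.sum_congr rfl fun i _ => Finset.sum_congr rfl fun j _ => ?_
    rw [← Int.cast_smul_eq_zsmul ℝ, smul_smul, mul_comm]
  have hv0 : v ≠ 0 := by
    intro h
    apply hk0
    have h2 : ∑ j, (k j) • b0 j = 0 := by
      apply Subtype.ext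
      rw [ZeroMemClass.coe_zero, ← h, hv]
      simp
    funext j
    exact Fintype.linearIndependent_iff.1 b0.linearIndependent k h2 j
  set w := (T⁻¹.transpose).mulVec (fun i => (l i : ℝ)) with hw
  have hwT : ∀ j, ∑ i, T i j * w i = l j := by
    intro j
    have : T.transpose.mulVec w = fun i => (l i : ℝ) := by
      rw [hw, Matrix.mulVec_mulVec, ← Matrix.transpose_mul, Matrix.nonsing_inv_mul _ hdet.isUnit]
      simp
    exact congrFun this j
  set y : E := ∑ i, w i • e i with hy
  have hby : ∀ j, ⟪(b0 j : E), y⟫ = (l j : ℝ) := by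
    intro j
    rw [← hbapp, hTe, hy, ← hwT]
    rw [e.orthonormal.inner_sum]
    simp
  have hyd := hd y (by
    intro x hx
    have hxM : x ∈ M := hx
    obtain ⟨q, hq⟩ : ∃ q : Fin n → ℤ, x = ∑ j, q j • (b0 j : E) := by
      refine ⟨fun j => b0.repr ⟨x, hxM⟩ j, ?_⟩
      have h5 : ((∑ j, b0.repr ⟨x, hxM⟩ j • b0 j : M) : E) = x :=
        congrArg (Subtype.val) (b0.sum_repr ⟨x, hxM⟩)
      refine h5.symm.trans ?_
      simp only [Submodule.coe_sum, Submodule.coe_smul]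
    refine ⟨∑ j, q j * l j, ?_⟩
    rw [hq, sum_inner]
    push_cast
    refine Finset.sum_congr rfl fun j _ => ?_
    rw [← Int.cast_smul_eq_zsmul ℝ, real_inner_smul_left, hby]) (by
    intro h0
    apply hl0
    funext j
    have := hby j
    rw [h0, inner_zero_right] at this
    exact_mod_cast this.symm)
  have n1 : ‖v‖ ≤ √n * r := by
    rw [hveq]; exact onb_norm_le e _ r hrpos.le hk
  have n2 : ‖y‖ ≤ √n * r⁻¹ := onb_norm_le e _ _ (by positivity) hl
  have := hcon v hvM hv0
  rw [div_lt_iff₀ hμ] at this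
  have h3 : ‖v‖ * μ ≤ (√n * r) * (√n * r⁻¹) := by
    apply mul_le_mul n1 (hyd.trans n2) hμ.le (by positivity)
  have h4 : (√n * r) * (√n * r⁻¹) = n := by
    have := Real.mul_self_sqrt (Nat.cast_nonneg (α := ℝ) n)
    field_simp
    nlinarith
  linarith

/-- `∑_{i ≤ n} i²`. -/
def sqSum (n : ℕ) : ℝ := ∑ i ∈ Finset.range (n + 1), (i : ℝ) ^ 2

lemma transference (n : ℕ) : ∀ {E : Type} [NormedAddCommGroup E] [InnerProductSpace ℝ E]
    [FiniteDimensional ℝ E] (_ : Module.finrank ℝ E = n)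
    (L : AddSubgroup E) (μ : ℝ) (_ : 0 < μ)
    (_ : ∀ y : E, (∀ x ∈ L, ∃ m : ℤ, ⟪x, y⟫ = (m : ℝ)) → y ≠ 0 → μ ≤ ‖y‖) (x : E),
    ∃ v ∈ L, ‖x - v‖ ^ 2 ≤ sqSum n / (4 * μ ^ 2) := by
  induction n with
  | zero =>
    intro E _ _ _ hE L μ hμ hd x
    have := Module.finrank_zero_iff.1 hE
    refine ⟨0, L.zero_mem, ?_⟩
    rw [Subsingleton.elim x 0]
    simp [sqSum]
  | succ n ih =>
    intro E _ _ _ hE L μ hμ hd x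
    obtain ⟨v, hvL, hv0, hv⟩ := short_vec (Nat.succ_pos n) hE L μ hμ hd
    have : Fact (Module.finrank ℝ E = n + 1) := ⟨hE⟩
    have hF := Submodule.finrank_orthogonal_span_singleton (𝕜 := ℝ) (n := n) hv0
    set F := (ℝ ∙ v)ᗮ with hFdef
    let p : E →ₗ[ℝ] F := F.orthogonalProjectionOnto.toLinearMap
    have hp : ∀ z, p z = F.orthogonalProjectionOnto z := fun z => rfl
    obtain ⟨w, hw, hxw⟩ := ih hF (L.map p.toAddMonoidHom) μ hμ (by
      intro y hy hy0
      have := hd (y : E) (by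
        intro z hz
        obtain ⟨m, hm⟩ := hy (p z) ⟨z, hz, rfl⟩
        refine ⟨m, ?_⟩
        rw [← hm, hp, Submodule.inner_orthogonalProjectionOnto_eq_of_mem_right]) (by simpa using hy0)
      simpa using this) (p x)
    obtain ⟨l, hl, rfl⟩ := hw
    have hvn : 0 < ‖v‖ := norm_pos_iff.2 hv0
    -- decomposition of x - l
    have hz : ∃ c : ℝ, x - l = c • v + (p (x - l) : E) := by
      have h1 : (x - l) - (p (x - l) : E) ∈ Fᗮ := by
        rw [hp]; exact Submodule.sub_starProjection_mem_orthogonal _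
      have h1' : (x - l) - (p (x - l) : E) ∈ (ℝ ∙ v)ᗮᗮ := h1
      rw [Submodule.orthogonal_orthogonal, Submodule.mem_span_singleton] at h1'
      obtain ⟨c, hc⟩ := h1'
      exact ⟨c, by rw [hc]; abel⟩
    obtain ⟨c, hc⟩ := hz
    refine ⟨l + round c • v, L.add_mem hl (L.zsmul_mem hvL _), ?_⟩
    have h2 : x - (l + round c • v) = (c - round c) • v + (p (x - l) : E) := by
      calc x - (l + round c • v) = (x - l) - round c • v := by abel
        _ = (c • v + (p (x - l) : E)) - round c • v := by rw [← hc]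
        _ = _ := by rw [← Int.cast_smul_eq_zsmul ℝ, sub_smul]; abel
    have h3 : ⟪(c - round c) • v, (p (x - l) : E)⟫ = 0 := by
      rw [real_inner_smul_left,
        (Submodule.mem_orthogonal_singleton_iff_inner_right).1 (p (x - l)).2, mul_zero]
    have h4 : ‖x - (l + round c • v)‖ ^ 2 = (c - round c) ^ 2 * ‖v‖ ^ 2 + ‖p x - p l‖ ^ 2 := by
      rw [h2, sq, norm_add_sq_eq_norm_sq_add_norm_sq_real h3, norm_smul, ← map_sub,
        Submodule.coe_norm]
      rw [Real.norm_eq_abs, ← sq_abs (c - round c)]; ring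
    have h5 : (c - round c) ^ 2 ≤ (1 / 2) ^ 2 := by
      rw [← sq_abs]
      exact pow_le_pow_left₀ (abs_nonneg _) (abs_sub_round c) 2
    have h6 : ‖v‖ ^ 2 ≤ ((n + 1 : ℕ) / μ) ^ 2 := pow_le_pow_left₀ hvn.le hv 2
    have h7 : ‖p x - p l‖ ^ 2 ≤ sqSum n / (4 * μ ^ 2) := hxw
    have h8 : sqSum (n + 1) = sqSum n + ((n + 1 : ℕ) : ℝ) ^ 2 := by
      rw [sqSum, Finset.sum_range_succ]; rfl
    rw [h4, h8]
    calc (c - round c) ^ 2 * ‖v‖ ^ 2 + ‖p x - p l‖ ^ 2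
        ≤ (1 / 2) ^ 2 * ((n + 1 : ℕ) / μ) ^ 2 + sqSum n / (4 * μ ^ 2) := by gcongr
      _ = _ := by field_simp; ring

lemma sqSum_eq (n : ℕ) : sqSum n = n * (n + 1) * (2 * n + 1) / 6 := by
  induction n with
  | zero => simp [sqSum]
  | succ n ih =>
    have h8 : sqSum (n + 1) = sqSum n + ((n + 1 : ℕ) : ℝ) ^ 2 := by
      rw [sqSum, Finset.sum_range_succ]; rfl
    rw [h8, ih]; push_cast; ring

lemma Cd_pos (d : ℕ) : 0 < Cd d := by
  unfold Cd
  have := Real.Gamma_pos_of_pos (show (0 : ℝ) < 1 + d / 2 by positivity)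
  have := Real.pi_pos
  positivity

/-- `√(∑ i²) C_{d-1} ≤ d C_d`. -/
lemma const_ineq (k : ℕ) : √(sqSum (k + 1)) * Cd k ≤ ((k + 1 : ℕ) : ℝ) * Cd (k + 1) := by
  rcases Nat.eq_zero_or_pos k with rfl | hk
  · have h1 : Cd 0 = 1 := by simp [Cd]
    have h2 : Cd (0 + 1) = 1 := by
      have : Real.Gamma (1 + 1 / 2) = 1 / 2 * √Real.pi := by
        rw [add_comm, Real.Gamma_add_one (by norm_num), Real.Gamma_one_half_eq]
      simp only [Cd, zero_add, Nat.cast_one, pow_one, this, ← Real.sqrt_eq_rpow]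
      have := Real.sqrt_pos.2 Real.pi_pos
      field_simp
    rw [h1, h2, sqSum_eq]; norm_num
  · set x : ℝ := 1 + (k : ℝ) / 2 with hx
    have hk1 : (1 : ℝ) ≤ k := by exact_mod_cast hk
    have g0 : 0 < Real.Gamma x := Real.Gamma_pos_of_pos (by positivity)
    have g1 : 0 < Real.Gamma (x + 1 / 2) := Real.Gamma_pos_of_pos (by positivity)
    have g2 : 0 < Real.Gamma (x - 1 / 2) := Real.Gamma_pos_of_pos (by rw [hx]; linarith)
    have hlc := Real.Gamma_mul_add_mul_le_rpow_Gamma_mul_rpow_Gamma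
      (s := x - 1 / 2) (t := x + 1 / 2) (a := 1 / 2) (b := 1 / 2)
      (by rw [hx]; linarith) (by positivity) (by norm_num) (by norm_num) (by norm_num)
    have e1 : (1 / 2 : ℝ) * (x - 1 / 2) + 1 / 2 * (x + 1 / 2) = x := by ring
    rw [e1, ← Real.sqrt_eq_rpow, ← Real.sqrt_eq_rpow, ← Real.sqrt_mul g2.le] at hlc
    have hlc2 : Real.Gamma x ^ 2 ≤ Real.Gamma (x - 1 / 2) * Real.Gamma (x + 1 / 2) := by
      calc Real.Gamma x ^ 2 ≤ √(Real.Gamma (x - 1 / 2) * Real.Gamma (x + 1 / 2)) ^ 2 :=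
            pow_le_pow_left₀ g0.le hlc 2
        _ = _ := Real.sq_sqrt (by positivity)
    have e2 : Real.Gamma (x + 1 / 2) = (x - 1 / 2) * Real.Gamma (x - 1 / 2) := by
      rw [← Real.Gamma_add_one (by rw [hx]; linarith)]; congr 1; ring
    have hlc3 : (x - 1 / 2) * Real.Gamma x ^ 2 ≤ Real.Gamma (x + 1 / 2) ^ 2 := by
      have : 0 ≤ x - 1 / 2 := by rw [hx]; linarith
      calc (x - 1 / 2) * Real.Gamma x ^ 2
          ≤ (x - 1 / 2) * (Real.Gamma (x - 1 / 2) * Real.Gamma (x + 1 / 2)) := by gcongr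
        _ = _ := by rw [sq]; nth_rw 2 [e2]; ring
    have c1 : Cd (k + 1) = Cd k * (2 * Real.Gamma (x + 1 / 2) / (Real.Gamma x * √Real.pi)) := by
      have e3 : 1 + ((k + 1 : ℕ) : ℝ) / 2 = x + 1 / 2 := by push_cast; rw [hx]; ring
      have e4 : Real.pi ^ (((k + 1 : ℕ) : ℝ) / 2) = Real.pi ^ ((k : ℝ) / 2) * √Real.pi := by
        rw [Real.sqrt_eq_rpow, ← Real.rpow_add Real.pi_pos]; congr 1; push_cast; ring
      have := Real.sqrt_pos.2 Real.pi_pos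
      have := Real.rpow_pos_of_pos Real.pi_pos ((k : ℝ) / 2)
      rw [Cd, Cd, e3, e4, ← hx]
      field_simp
      ring
    have hsp := Real.sqrt_pos.2 Real.pi_pos
    have hmain : √(sqSum (k + 1)) ≤
        ((k + 1 : ℕ) : ℝ) * (2 * Real.Gamma (x + 1 / 2) / (Real.Gamma x * √Real.pi)) := by
      apply Real.sqrt_le_iff.2 ⟨by positivity, ?_⟩
      rw [mul_pow, div_pow, mul_pow, mul_pow, Real.sq_sqrt Real.pi_pos.le, ← mul_div_assoc,
        le_div_iff₀ (by have := Real.pi_pos; positivity), sqSum_eq]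
      push_cast
      have hpi : Real.pi < 3.15 := Real.pi_lt_d2
      have hG : 0 < Real.Gamma x ^ 2 := by positivity
      have hkk : ((k : ℝ) + 1) * (k + 1 + 1) * (2 * (k + 1) + 1) / 6 * Real.pi ≤
          ((k : ℝ) + 1) ^ 2 * (4 * (x - 1 / 2)) := by
        calc ((k : ℝ) + 1) * (k + 1 + 1) * (2 * (k + 1) + 1) / 6 * Real.pi
            ≤ ((k : ℝ) + 1) * (k + 1 + 1) * (2 * (k + 1) + 1) / 6 * 3.15 := by gcongr
          _ ≤ _ := by
            rw [hx]
            have : ((k : ℝ) + 1 + 1) * (2 * (k + 1) + 1) / 6 * 3.15 ≤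
              ((k : ℝ) + 1) * (4 * (1 + (k : ℝ) / 2 - 1 / 2)) := by nlinarith
            nlinarith
      calc ((k : ℝ) + 1) * (k + 1 + 1) * (2 * (k + 1) + 1) / 6 * (Real.Gamma x ^ 2 * Real.pi)
          = (((k : ℝ) + 1) * (k + 1 + 1) * (2 * (k + 1) + 1) / 6 * Real.pi) * Real.Gamma x ^ 2 := by
            ring
        _ ≤ (((k : ℝ) + 1) ^ 2 * (4 * (x - 1 / 2))) * Real.Gamma x ^ 2 := by gcongr
        _ = ((k : ℝ) + 1) ^ 2 * 4 * ((x - 1 / 2) * Real.Gamma x ^ 2) := by ring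
        _ ≤ ((k : ℝ) + 1) ^ 2 * 4 * Real.Gamma (x + 1 / 2) ^ 2 := by gcongr
        _ = _ := by ring
    rw [c1]
    have := Cd_pos k
    calc √(sqSum (k + 1)) * Cd k ≤ _ := mul_le_mul_of_nonneg_right hmain this.le
      _ = _ := by ring

open MeasureTheory in
lemma ball_vol (k : ℕ) (r : ℝ) (hr : 0 < r) :
    volume (Metric.ball (0 : EuclideanSpace ℝ (Fin k)) r) = ENNReal.ofReal (r ^ k * 2 ^ k / Cd k) := by
  rcases Nat.eq_zero_or_pos k with rfl | hk
  · have h1 : Cd 0 = 1 := by simp [Cd]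
    have h2 : Metric.ball (0 : EuclideanSpace ℝ (Fin 0)) r = Set.univ := by
      ext x
      simp [Subsingleton.elim x 0, hr]
    rw [h1, h2]
    have := (PiLp.volume_preserving_toLp (Fin 0)).measure_preimage
      (s := Set.univ) MeasurableSet.univ.nullMeasurableSet
    rw [← this]
    simp [volume_pi]
  · have : Nonempty (Fin k) := ⟨⟨0, hk⟩⟩
    rw [EuclideanSpace.volume_ball, Fintype.card_fin, ← ENNReal.ofReal_pow hr.le,
      ← ENNReal.ofReal_mul (by positivity)]
    congr 1
    have e4 : √Real.pi ^ k = Real.pi ^ ((k : ℝ) / 2) := by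
      rw [Real.sqrt_eq_rpow, ← Real.rpow_natCast, ← Real.rpow_mul Real.pi_pos.le]; congr 1; ring
    have := Real.rpow_pos_of_pos Real.pi_pos ((k : ℝ) / 2)
    have := Real.Gamma_pos_of_pos (show (0 : ℝ) < 1 + k / 2 by positivity)
    rw [e4, Cd, add_comm]
    field_simp

open MeasureTheory in
/-- If `T` generates a lattice of determinant `N`, whose nonzero vectors have length at least `μ`
and integer inner product with `x ≠ 0`, then `x` cannot be too short. -/
lemma cyl_bound (k : ℕ) (T : Matrix (Fin (k + 1)) (Fin (k + 1)) ℝ) (hT : T.det ≠ 0)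
    (μ : ℝ) (hμ : 0 < μ) (x : Euc (k + 1)) (hx : x ≠ 0)
    (h1 : ∀ l : Fin (k + 1) → ℤ, l ≠ 0 →
      μ ≤ ‖(WithLp.toLp 2 (T.mulVec (fun i => (l i : ℝ))) : Euc (k + 1))‖)
    (h2 : ∀ l : Fin (k + 1) → ℤ, ∃ m : ℤ,
      ⟪x, (WithLp.toLp 2 (T.mulVec (fun i => (l i : ℝ))) : Euc (k + 1))⟫ = (m : ℝ)) :
    1 ≤ Cd k * |T.det| / μ ^ k * ‖x‖ := by
  have hxn : 0 < ‖x‖ := norm_pos_iff.2 hx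
  obtain ⟨b, hb⟩ : ∃ b : OrthonormalBasis (Fin (k + 1)) ℝ (Euc (k + 1)),
      ∀ i ∈ ({0} : Set (Fin (k + 1))), b i = (fun _ => (‖x‖⁻¹ • x)) i := by
    apply Orthonormal.exists_orthonormalBasis_extension_of_card_eq
    · simp
    · constructor
      · rintro ⟨i, hi⟩
        simp [norm_smul, hxn.ne']
      · rintro ⟨i, hi⟩ ⟨j, hj⟩ hij
        exfalso
        apply hij
        simp at hi hj
        simp [hi, hj]
  have hb0 : b 0 = ‖x‖⁻¹ • x := hb 0 rfl
  let A : Set ℝ := Set.Ioo (-‖x‖⁻¹) ‖x‖⁻¹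
  let B : Set (Fin k → ℝ) := WithLp.toLp 2 ⁻¹' (Metric.ball (0 : EuclideanSpace ℝ (Fin k)) μ)
  have hBm : MeasurableSet B := (PiLp.volume_preserving_toLp (Fin k)).measurable
    Metric.isOpen_ball.measurableSet
  have hBv : volume B = ENNReal.ofReal (μ ^ k * 2 ^ k / Cd k) := by
    rw [← ball_vol k μ hμ]
    exact (PiLp.volume_preserving_toLp (Fin k)).measure_preimage
      Metric.isOpen_ball.measurableSet.nullMeasurableSet
  have hABm : MeasurableSet (A ×ˢ B) := measurableSet_Ioo.prod hBm
  let f : (Fin (k + 1) → ℝ) → ℝ × (Fin k → ℝ) := fun z =>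
    MeasurableEquiv.piFinSuccAbove (fun _ => ℝ) 0
      (WithLp.ofLp (b.repr (WithLp.toLp 2 z)))
  have hf : MeasurePreserving f volume volume :=
    (volume_preserving_piFinSuccAbove (fun _ => ℝ) 0).comp
      ((PiLp.volume_preserving_ofLp (Fin (k + 1))).comp
        (b.measurePreserving_repr.comp (PiLp.volume_preserving_toLp (Fin (k + 1)))))
  have hKv : volume (f ⁻¹' (A ×ˢ B)) =
      ENNReal.ofReal (2 * ‖x‖⁻¹ * (μ ^ k * 2 ^ k / Cd k)) := by
    rw [hf.measure_preimage hABm.nullMeasurableSet, Measure.volume_eq_prod, Measure.prod_prod, hBv,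
      Real.volume_Ioo, ← ENNReal.ofReal_mul (by linarith [inv_pos.2 hxn])]
    congr 2
    ring
  have hfst : ∀ z, (f z).1 = ‖x‖⁻¹ * ⟪x, (WithLp.toLp 2 z : Euc (k + 1))⟫ := by
    intro z
    have : (f z).1 = b.repr (WithLp.toLp 2 z) 0 := rfl
    rw [this, b.repr_apply_apply, hb0, real_inner_smul_left]
  have hsnd : ∀ z, (f z).2 = fun i : Fin k => b.repr (WithLp.toLp 2 z) i.succ := by
    intro z
    rfl
  let g : (Fin (k + 1) → ℝ) →ₗ[ℝ] ℝ × (Fin k → ℝ) :=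
    { toFun := f
      map_add' := by
        intro u v
        ext i
        · simp only [hfst, Prod.fst_add, WithLp.toLp_add, inner_add_right]; ring
        · simp [hsnd, Prod.snd_add, WithLp.toLp_add]
      map_smul' := by
        intro c v
        ext i
        · simp only [hfst, Prod.smul_fst, WithLp.toLp_smul, inner_smul_right, smul_eq_mul,
            RingHom.id_apply]; ring
        · simp [hsnd, Prod.smul_snd, WithLp.toLp_smul] }
  have hfg : f = g := rfl
  by_contra! hcon
  have hC := Cd_pos k
  have hdp : 0 < |T.det| := abs_pos.2 hT
  obtain ⟨l, hl0, hl⟩ := mink_aux (Nat.succ_pos k) T hT (f ⁻¹' (A ×ˢ B)) (by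
      intro z hz
      rw [hfg] at hz ⊢
      rw [Set.mem_preimage, map_neg]
      rw [Set.mem_preimage] at hz
      obtain ⟨hz1, hz2⟩ := hz
      refine ⟨⟨by simpa using neg_lt_neg hz1.2, by simpa using neg_lt.1 hz1.1⟩, ?_⟩
      simp only [B, Set.mem_preimage, mem_ball_zero_iff, Prod.snd_neg, WithLp.toLp_neg,
        norm_neg] at hz2 ⊢
      exact hz2) (by
      rw [hfg]
      apply Convex.linear_preimage
      apply Convex.prod (convex_Ioo _ _)
      exact (convex_ball (0 : EuclideanSpace ℝ (Fin k)) μ).linear_preimage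
        (WithLp.linearEquiv 2 ℝ (Fin k → ℝ)).symm.toLinearMap) (Or.inl (by
      rw [hKv]
      have : (2 : ENNReal) ^ (k + 1) = ENNReal.ofReal (2 ^ (k + 1)) := by
        rw [ENNReal.ofReal_pow (by norm_num)]; simp
      show ENNReal.ofReal |T.det| * 2 ^ (k + 1) < _
      rw [this, ← ENNReal.ofReal_mul (by positivity)]
      rw [ENNReal.ofReal_lt_ofReal_iff (by positivity)]
      rw [div_mul_eq_mul_div, div_lt_one (by positivity)] at hcon
      have : 2 * ‖x‖⁻¹ * (μ ^ k * 2 ^ k / Cd k) = 2 ^ (k + 1) * μ ^ k / (‖x‖ * Cd k) := by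
        field_simp; ring
      rw [this, lt_div_iff₀ (by positivity)]
      calc |T.det| * 2 ^ (k + 1) * (‖x‖ * Cd k) = 2 ^ (k + 1) * (Cd k * |T.det| * ‖x‖) := by ring
        _ < _ := by gcongr))
  set z := T.mulVec (fun i => (l i : ℝ)) with hz
  obtain ⟨hl1, hl2⟩ := hl
  obtain ⟨m, hm⟩ := h2 l
  rw [← hz] at hm
  have hm0 : m = 0 := by
    simp only [A, hfst, hm, Set.mem_Ioo] at hl1
    have a1 : -1 < (m : ℝ) := by
      have := hl1.1
      rw [neg_lt, ← mul_neg] at this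
      have := lt_of_mul_lt_mul_left (by simpa using this) (inv_pos.2 hxn).le (b := -(m : ℝ)) (c := 1)
      linarith
    have a2 : (m : ℝ) < 1 :=
      lt_of_mul_lt_mul_left (by simpa using hl1.2) (inv_pos.2 hxn).le
    have a3 : -1 < m := by exact_mod_cast a1
    have a4 : m < 1 := by exact_mod_cast a2
    omega
  have hn1 := h1 l hl0
  have hlt : ‖(WithLp.toLp 2 z : Euc (k + 1))‖ ^ 2 < μ ^ 2 := by
    rw [← b.repr.norm_map, EuclideanSpace.norm_sq_eq, Fin.sum_univ_succ]
    have e0 : b.repr (WithLp.toLp 2 z) 0 = 0 := by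
      have h7 : b.repr (WithLp.toLp 2 z) 0 = _ := hfst z
      rw [h7, hm, hm0]
      simp
    rw [e0]
    simp only [B, Set.mem_preimage, mem_ball_zero_iff, hsnd] at hl2
    have := pow_lt_pow_left₀ hl2 (norm_nonneg _) (n := 2) (by norm_num)
    rw [EuclideanSpace.norm_sq_eq] at this
    simpa using this
  have := lt_of_pow_lt_pow_left₀ 2 hμ.le hlt
  linarith

/-- The Korobov lattice as an additive subgroup. -/
def korAdd (d N a : ℕ) : AddSubgroup (Euc d) where
  carrier := korobovLat d N a
  zero_mem' := ⟨0, 0, by intro i; simp⟩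
  add_mem' := by
    rintro x y ⟨n, m, h⟩ ⟨n', m', h'⟩
    refine ⟨n + n', m + m', fun i => ?_⟩
    simp only [PiLp.add_apply, h, h', Pi.add_apply]
    push_cast
    ring
  neg_mem' := by
    rintro x ⟨n, m, h⟩
    refine ⟨-n, -m, fun i => ?_⟩
    simp only [PiLp.neg_apply, h, Pi.neg_apply]
    push_cast
    ring

lemma mem_dual_of (d N a : ℕ) (hN : N ≠ 0) (y : Euc d) (h : Fin d → ℤ) (hy : ∀ i, y i = h i)
    (hdvd : (N : ℤ) ∣ ∑ i, h i * (a : ℤ) ^ (i : ℕ)) : y ∈ dualLat (korobovLat d N a) := by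
  rintro x ⟨n, m, hx⟩
  obtain ⟨q, hq⟩ := hdvd
  refine ⟨n * q + ∑ i, m i * h i, ?_⟩
  have hN' : (N : ℝ) ≠ 0 := by exact_mod_cast hN
  have hq' : ∑ i, (h i : ℝ) * (a : ℝ) ^ (i : ℕ) = N * q := by exact_mod_cast hq
  have hq2 : (q : ℝ) = (∑ i, (h i : ℝ) * (a : ℝ) ^ (i : ℕ)) / N := by
    rw [hq']; field_simp
  rw [PiLp.inner_apply]
  push_cast
  rw [hq2, Finset.sum_div, Finset.mul_sum, ← Finset.sum_add_distrib]
  refine Finset.sum_congr rfl fun i _ => ?_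
  rw [hx, hy]
  simp only [RCLike.inner_apply, conj_trivial]
  ring

lemma mem_dual (d N a : ℕ) (hN : N ≠ 0) (y : Euc d) (hy : y ∈ dualLat (korobovLat d N a)) :
    ∃ h : Fin d → ℤ, (∀ i, y i = h i) ∧ (N : ℤ) ∣ ∑ i, h i * (a : ℤ) ^ (i : ℕ) := by
  have hN' : (N : ℝ) ≠ 0 := by exact_mod_cast hN
  have h1 : ∀ i, ∃ n : ℤ, y i = n := by
    intro i
    obtain ⟨n, hn⟩ := hy (EuclideanSpace.single i 1) ⟨0, Pi.single i 1, by
      intro j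
      by_cases hj : j = i
      · subst hj; simp
      · simp [hj]⟩
    refine ⟨n, ?_⟩
    rw [← hn, EuclideanSpace.inner_single_left]; simp
  choose h hh using h1
  refine ⟨h, hh, ?_⟩
  obtain ⟨n, hn⟩ := hy (WithLp.toLp 2 fun i => (a : ℝ) ^ (i : ℕ) / N) ⟨1, 0, by intro j; simp⟩
  refine ⟨n, ?_⟩
  rw [PiLp.inner_apply] at hn
  have : ∑ i, (h i : ℝ) * (a : ℝ) ^ (i : ℕ) = N * n := by
    rw [← hn, Finset.mul_sum]
    refine Finset.sum_congr rfl fun i _ => ?_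
    rw [hh]
    simp only [RCLike.inner_apply, conj_trivial]
    field_simp
  exact_mod_cast this

/-- A generating matrix of the dual of the Korobov lattice. -/
def dualMat (k N a : ℕ) : Matrix (Fin (k + 1)) (Fin (k + 1)) ℝ :=
  fun i j => if i = 0 then (if j = 0 then (N : ℝ) else -(a : ℝ) ^ (j : ℕ)) else
    (if i = j then 1 else 0)

lemma dualMat_det (k N a : ℕ) : (dualMat k N a).det = N := by
  rw [Matrix.det_of_isUpperTriangular]
  · rw [Fin.prod_univ_succ]
    simp [dualMat]
  · intro i j hij
    have h0 : i ≠ 0 := by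
      rintro rfl
      exact absurd hij (by simp)
    have h1 : i ≠ j := by
      rintro rfl
      exact absurd hij (by simp)
    simp [dualMat, h0, h1]

lemma dualMat_mem (k N a : ℕ) (hN : N ≠ 0) (l : Fin (k + 1) → ℤ) :
    (WithLp.toLp 2 ((dualMat k N a).mulVec (fun i => (l i : ℝ))) : Euc (k + 1)) ∈
      dualLat (korobovLat (k + 1) N a) := by
  apply mem_dual_of _ _ _ hN _
    (Fin.cons (N * l 0 - ∑ j : Fin k, l j.succ * (a : ℤ) ^ ((j : ℕ) + 1)) fun j => l j.succ)
  · intro i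
    refine Fin.cases ?_ (fun j => ?_) i
    · simp [dualMat, Matrix.mulVec, dotProduct, Fin.sum_univ_succ, sub_eq_add_neg, mul_comm]
    · simp [dualMat, Matrix.mulVec, dotProduct, Fin.sum_univ_succ]
  · rw [Fin.sum_univ_succ]
    simp

lemma succMin_le {d : ℕ} (S : Set (Euc d)) (y : Euc d) (hy : y ∈ S) (h0 : y ≠ 0) :
    succMin S 1 ≤ ‖y‖ := by
  apply csInf_le ⟨0, fun r hr => hr.1.le⟩
  refine ⟨norm_pos_iff.2 h0, ?_⟩
  rw [Submodule.one_le_finrank_iff, Ne, Submodule.span_eq_bot]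
  intro h
  exact h0 (h y ⟨hy, by simp⟩)

lemma le_succMin {d : ℕ} (S : Set (Euc d)) (s : ℝ) (hne : ∃ y ∈ S, y ≠ 0)
    (h : ∀ y ∈ S, y ≠ 0 → s ≤ ‖y‖) : s ≤ succMin S 1 := by
  apply le_csInf
  · obtain ⟨y, hy, h0⟩ := hne
    refine ⟨‖y‖, norm_pos_iff.2 h0, ?_⟩
    rw [Submodule.one_le_finrank_iff, Ne, Submodule.span_eq_bot]
    intro h
    exact h0 (h y ⟨hy, by simp⟩)
  · rintro r ⟨hr, h1⟩
    rw [Submodule.one_le_finrank_iff, Ne, Submodule.span_eq_bot] at h1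
    push Not at h1
    obtain ⟨y, ⟨hy, hyr⟩, h0⟩ := h1
    exact (h y hy h0).trans (by simpa using hyr)

open Polynomial in
lemma counting (d N R : ℕ) (hN : N.Prime) (hRN : R < N)
    (hcard : (2 * R + 1) ^ d * (d - 1) < N - 1) :
    ∃ a : ℕ, 1 ≤ a ∧ a ≤ N - 1 ∧ ∀ h : Fin d → ℤ, h ≠ 0 → (∀ i, |h i| ≤ R) →
      ¬ (N : ℤ) ∣ ∑ i, h i * (a : ℤ) ^ (i : ℕ) := by
  classical
  have : Fact N.Prime := ⟨hN⟩
  let P : (Fin d → ℤ) → (ZMod N)[X] := fun h => ∑ i, C (h i : ZMod N) * X ^ (i : ℕ)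
  have hcoef : ∀ h (i : Fin d), (P h).coeff i = (h i : ZMod N) := by
    intro h i
    simp only [P, finsetSum_coeff, coeff_C_mul, coeff_X_pow]
    simp [Fin.val_inj]
  have hdeg : ∀ h, (P h).natDegree ≤ d - 1 := by
    intro h
    apply natDegree_sum_le_of_forall_le
    intro i _
    exact (natDegree_C_mul_X_pow_le _ _).trans (by have := i.2; omega)
  let H : Finset (Fin d → ℤ) := Fintype.piFinset fun _ => Finset.Icc (-(R : ℤ)) R
  have hH : H.card = (2 * R + 1) ^ d := by
    simp only [H, Fintype.card_piFinset, Int.card_Icc, Finset.prod_const, Finset.card_univ,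
      Fintype.card_fin]
    congr 1
    omega
  let Bad : Finset (ZMod N) := H.biUnion fun h => (P h).roots.toFinset
  have hBad : Bad.card < ((Finset.univ : Finset (ZMod N)).erase 0).card := by
    rw [Finset.card_erase_of_mem (Finset.mem_univ _), Finset.card_univ, ZMod.card]
    refine lt_of_le_of_lt (Finset.card_biUnion_le_card_mul _ _ (d - 1) ?_) (by rwa [hH])
    intro h _
    exact (Multiset.toFinset_card_le _).trans ((card_roots' _).trans (hdeg h))
  obtain ⟨α, hα, hαB⟩ := Finset.exists_mem_notMem_of_card_lt_card hBad
  have hα0 : α ≠ 0 := (Finset.mem_erase.1 hα).1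
  refine ⟨α.val, ?_, ?_, ?_⟩
  · have : α.val ≠ 0 := by rwa [Ne, ZMod.val_eq_zero]
    omega
  · have := α.val_lt
    omega
  · intro h h0 hR hdvd
    apply hαB
    rw [Finset.mem_biUnion]
    refine ⟨h, ?_, ?_⟩
    · rw [Fintype.mem_piFinset]
      intro i
      rw [Finset.mem_Icc]
      exact abs_le.1 (hR i)
    · rw [Multiset.mem_toFinset, mem_roots']
      constructor
      · intro hP
        apply h0
        funext i
        have := hcoef h i
        rw [hP, coeff_zero, eq_comm, ZMod.intCast_zmod_eq_zero_iff_dvd] at this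
        refine Int.eq_zero_of_abs_lt_dvd this ?_
        exact lt_of_le_of_lt (hR i) (by exact_mod_cast hRN)
      · rw [← ZMod.intCast_zmod_eq_zero_iff_dvd] at hdvd
        push_cast at hdvd
        rw [ZMod.natCast_zmod_val] at hdvd
        simp only [P, IsRoot.def, eval_finsetSum, eval_mul, eval_C, eval_pow, eval_X]
        exact hdvd

lemma good_param (d : ℕ) (hd : 1 ≤ d) (N : ℕ) (hN : N.Prime) :
    ∃ a : ℕ, 1 ≤ a ∧ a ≤ N - 1 ∧ ∀ y ∈ dualLat (korobovLat d N a), y ≠ 0 →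
      1 / (6 * d) * (N : ℝ) ^ ((1 : ℝ) / d) ≤ ‖y‖ := by
  have hN2 := hN.two_le
  have hNR : (2 : ℝ) ≤ N := by exact_mod_cast hN2
  have hdR : (1 : ℝ) ≤ d := by exact_mod_cast hd
  set s : ℝ := 1 / (6 * d) * (N : ℝ) ^ ((1 : ℝ) / d) with hs
  have hs0 : 0 ≤ s := by positivity
  have hN0 : N ≠ 0 := by omega
  have hcoord : ∀ (y : Euc d) i, |y i| ≤ ‖y‖ := fun y i => by
    simpa using PiLp.norm_apply_le y i
  by_cases hs1 : s ≤ 1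
  · refine ⟨1, le_refl _, by omega, ?_⟩
    intro y hy h0
    obtain ⟨h, hh, -⟩ := mem_dual d N 1 hN0 y hy
    have : ∃ i, h i ≠ 0 := by
      by_contra! hc
      apply h0
      ext i
      simp [hh, hc]
    obtain ⟨i, hi⟩ := this
    have h1 : (1 : ℝ) ≤ |y i| := by
      rw [hh]
      rw [← Int.cast_abs]
      exact_mod_cast Int.one_le_abs hi
    exact hs1.trans (h1.trans (hcoord y i))
  · push Not at hs1
    have hsd : s ^ d = (1 / (6 * d)) ^ d * N := by
      rw [hs, mul_pow, ← Real.rpow_natCast ((N : ℝ) ^ _), ← Real.rpow_mul (by positivity), one_div_mul_cancel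
        (by positivity), Real.rpow_one]
    set R := ⌊s⌋₊ with hR
    have hRs : (R : ℝ) ≤ s := Nat.floor_le hs0
    have hsN : s < N := by
      have : (N : ℝ) ^ ((1 : ℝ) / d) ≤ (N : ℝ) ^ (1 : ℝ) := by
        apply Real.rpow_le_rpow_of_exponent_le (by linarith)
        rw [div_le_one (by positivity)]; exact hdR
      rw [Real.rpow_one] at this
      have h6 : 1 / (6 * (d : ℝ)) ≤ 1 / 6 := by
        apply one_div_le_one_div_of_le <;> linarith
      calc s ≤ 1 / 6 * N := by rw [hs]; gcongr
        _ < N := by linarith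
    have hcard : (2 * R + 1) ^ d * (d - 1) < N - 1 := by
      have : ((2 * R + 1 : ℕ) : ℝ) ^ d * ((d - 1 : ℕ) : ℝ) < ((N - 1 : ℕ) : ℝ) := by
        rw [Nat.cast_sub hd, Nat.cast_sub (by omega)]
        push_cast
        have a1 : (2 * (R : ℝ) + 1) ^ d ≤ (3 * s) ^ d := by
          apply pow_le_pow_left₀ (by positivity); linarith
        have a2 : (3 * s) ^ d = (1 / 2) ^ d * (1 / d) ^ d * N := by
          rw [mul_pow, hsd, ← mul_assoc, ← mul_pow, ← mul_pow]
          congr 2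
          field_simp
          norm_num
        have a3 : ((1 : ℝ) / 2) ^ d ≤ 1 / 2 := by
          simpa using pow_le_pow_of_le_one (by norm_num : (0 : ℝ) ≤ 1 / 2) (by norm_num) hd
        have a4 : ((1 : ℝ) / d) ^ d ≤ 1 / d := by
          have : (1 : ℝ) / d ≤ 1 := by rw [div_le_one (by positivity)]; exact hdR
          simpa using pow_le_pow_of_le_one (by positivity : (0 : ℝ) ≤ 1 / d) this hd
        calc (2 * (R : ℝ) + 1) ^ d * (d - 1) ≤ (1 / 2 * (1 / d) * N) * (d - 1) := by
              apply mul_le_mul_of_nonneg_right _ (by linarith)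
              rw [a2] at a1
              refine a1.trans ?_
              gcongr
          _ < 1 / 2 * (1 / d) * N * d := by
              apply mul_lt_mul_of_pos_left (by linarith); positivity
          _ = N / 2 := by field_simp
          _ ≤ N - 1 := by linarith
      exact_mod_cast this
    obtain ⟨a, ha1, ha2, ha⟩ := counting d N R hN (by
      have : (R : ℝ) < N := lt_of_le_of_lt hRs hsN
      exact_mod_cast this) hcard
    refine ⟨a, ha1, ha2, ?_⟩
    intro y hy h0
    obtain ⟨h, hh, hdvd⟩ := mem_dual d N a hN0 y hy
    by_contra! hlt
    refine ha h ?_ ?_ hdvd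
    · rintro rfl
      apply h0
      ext i
      simp [hh]
    · intro i
      have h1 : |(h i : ℝ)| ≤ s := by
        rw [← hh]; exact (hcoord y i).trans hlt.le
      have h2 : ((h i).natAbs : ℝ) ≤ s := by
        rw [Nat.cast_natAbs]; push_cast; exact h1
      have h3 := Nat.le_floor h2
      rw [Int.abs_eq_natAbs]
      exact_mod_cast h3

lemma mesh_bound (k N a : ℕ) (hN : N ≠ 0) (μ : ℝ) (hμ : 0 < μ)
    (h : ∀ y ∈ dualLat (korobovLat (k + 1) N a), y ≠ 0 → μ ≤ ‖y‖) :
    meshRatio (korobovLat (k + 1) N a) ≤ ((k + 1 : ℕ) : ℝ) * Cd (k + 1) * N / μ ^ (k + 1) := by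
  have hNR : (0 : ℝ) < N := by positivity
  have hC := Cd_pos k
  have hC1 := Cd_pos (k + 1)
  have hcov : covRad (korobovLat (k + 1) N a) ≤ √(sqSum (k + 1)) / (2 * μ) := by
    apply ciSup_le
    intro x
    obtain ⟨v, hv, hxv⟩ := transference (k + 1) (E := Euc (k + 1)) (by simp)
      (korAdd (k + 1) N a) μ hμ (fun y hy h0 => h y hy h0) x
    refine (csInf_le ⟨0, ?_⟩ (Set.mem_image_of_mem (dist x) hv)).trans ?_
    · rintro _ ⟨z, _, rfl⟩
      exact dist_nonneg
    · rw [dist_eq_norm]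
      have : √(sqSum (k + 1)) / (2 * μ) = √(sqSum (k + 1) / (4 * μ ^ 2)) := by
        rw [Real.sqrt_div' _ (by positivity)]
        congr 1
        rw [show 4 * μ ^ 2 = (2 * μ) ^ 2 by ring, Real.sqrt_sq (by positivity)]
      rw [this]
      exact Real.le_sqrt_of_sq_le hxv
  set X : ℝ := Cd k * N / μ ^ k with hX
  have hXp : 0 < X := by positivity
  have hsep : 1 / (2 * X) ≤ sepRad (korobovLat (k + 1) N a) := by
    have : 1 / X ≤ sInf (Set.image norm (korobovLat (k + 1) N a \ {0})) := by
      apply le_csInf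
      · refine ⟨_, EuclideanSpace.single 0 1, ⟨⟨0, Pi.single 0 1, ?_⟩, ?_⟩, rfl⟩
        · intro j
          by_cases hj : j = 0
          · subst hj; simp
          · simp [hj]
        · simp
      · rintro _ ⟨x, ⟨hx, hx0⟩, rfl⟩
        have hdet := dualMat_det k N a
        have hdet0 : (dualMat k N a).det ≠ 0 := by rw [hdet]; exact hNR.ne'
        have := cyl_bound k (dualMat k N a) hdet0 μ hμ x hx0 (by
          intro l hl
          apply h _ (dualMat_mem k N a hN l)
          intro h0
          apply hl
          have h1 : (dualMat k N a).mulVec (fun i => (l i : ℝ)) = 0 :=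
            congrArg WithLp.ofLp h0
          have h2 := Matrix.eq_zero_of_mulVec_eq_zero hdet0 h1
          funext i
          have h3 : (l i : ℝ) = 0 := congrFun h2 i
          exact_mod_cast h3) (by
          intro l
          exact dualMat_mem k N a hN l x hx)
        rw [hdet, abs_of_pos hNR, ← hX] at this
        rw [div_le_iff₀ hXp]
        linarith
    rw [sepRad]
    calc 1 / (2 * X) = 1 / 2 * (1 / X) := by field_simp
      _ ≤ _ := by gcongr
  have hcon := const_ineq k
  rw [meshRatio]
  calc covRad (korobovLat (k + 1) N a) / sepRad (korobovLat (k + 1) N a)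
      ≤ (√(sqSum (k + 1)) / (2 * μ)) / (1 / (2 * X)) := by
        apply div_le_div₀ (by positivity) hcov (by positivity) hsep
    _ = (√(sqSum (k + 1)) * Cd k) * (N / μ ^ (k + 1)) := by
        rw [hX]; field_simp; ring
    _ ≤ (((k + 1 : ℕ) : ℝ) * Cd (k + 1)) * (N / μ ^ (k + 1)) := by gcongr
    _ = _ := by ring

theorem stmt18 (d : ℕ) (hd : 1 ≤ d) :
    ∃ c : ℝ, 0 < c ∧ ∀ N : ℕ, N.Prime → ∃ a : ℕ, 1 ≤ a ∧ a ≤ N - 1 ∧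
      succMin (dualLat (korobovLat d N a)) 1 ≥ c * (N : ℝ) ^ ((1 : ℝ) / d) ∧
      meshRatio (korobovLat d N a) ≤
        d * Cd d * N / (succMin (dualLat (korobovLat d N a)) 1) ^ d ∧
      d * Cd d * N / (succMin (dualLat (korobovLat d N a)) 1) ^ d ≤
        d * Cd d / c ^ d := by
  have hdR : (1 : ℝ) ≤ d := by exact_mod_cast hd
  refine ⟨1 / (6 * d), by positivity, ?_⟩
  intro N hN
  have hN0 : N ≠ 0 := hN.ne_zero
  have hNR : (0 : ℝ) < N := by exact_mod_cast hN.pos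
  obtain ⟨a, ha1, ha2, ha⟩ := good_param d hd N hN
  obtain ⟨k, rfl⟩ : ∃ k, d = k + 1 := ⟨d - 1, by omega⟩
  set c : ℝ := 1 / (6 * ((k + 1 : ℕ) : ℝ)) with hc
  have hcp : 0 < c := by positivity
  set S := dualLat (korobovLat (k + 1) N a) with hS
  have hle : c * (N : ℝ) ^ ((1 : ℝ) / ((k + 1 : ℕ) : ℝ)) ≤ succMin S 1 := by
    apply le_succMin S _ _ ha
    refine ⟨EuclideanSpace.single 0 (N : ℝ), ?_, ?_⟩
    · apply mem_dual_of _ _ _ hN0 _ (Pi.single 0 (N : ℤ))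
      · intro j
        by_cases hj : j = 0
        · subst hj; simp
        · simp [hj]
      · rw [Fin.sum_univ_succ]
        simp
    · intro h0
      have := congrArg (fun z : Euc (k + 1) => z 0) h0
      simp at this
      exact hN0 this
  have hμ : 0 < succMin S 1 := lt_of_lt_of_le (by positivity) hle
  have hC := Cd_pos (k + 1)
  refine ⟨a, ha1, ha2, hle, ?_, ?_⟩
  · exact mesh_bound k N a hN0 _ hμ (fun y hy h0 => succMin_le _ y hy h0)
  · have h1 : c ^ (k + 1) * N ≤ succMin S 1 ^ (k + 1) := by
      have := pow_le_pow_left₀ (by positivity) hle (k + 1)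
      rwa [mul_pow, ← Real.rpow_natCast ((N : ℝ) ^ _), ← Real.rpow_mul (by positivity),
        one_div_mul_cancel (by positivity), Real.rpow_one] at this
    rw [div_le_div_iff₀ (by positivity) (by positivity)]
    calc ((k + 1 : ℕ) : ℝ) * Cd (k + 1) * N * c ^ (k + 1)
        = ((k + 1 : ℕ) : ℝ) * Cd (k + 1) * (c ^ (k + 1) * N) := by ring
      _ ≤ _ := by gcongr

end
end
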